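/- (Szawlowski) Let f be a germ of holomorphic function at 0 ∈ ℂⁿ, n ≥ 2, that is right equivalent to the product of all coordinates, i.e., there exists a germ of biholomorphism σ : (ℂⁿ,0) → (ℂⁿ,0) with f ∘ σ⁻¹(z) = z₁ ⋯ zₙ. Then there exist a germ of volume-preserving biholomorphism Φ : (ℂⁿ,0) → (ℂⁿ,0) and a germ of automorphism Ψ : (ℂ,0) → (ℂ,0) such that f ∘ Φ(z) = Ψ(z₁ ⋯ zₙ); moreover Ψ is uniquely determined by f up to a sign. -/

import Mathlib

/-!
Write `P z = ∏ i, z i`, `E_i = z_i ∂/∂z_i` (`eul`), and fix a coordinate `o`. The fields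
`D_k = E_k - E_o` generate the torus action that preserves `P`; averaging over its circles (`rot`,
`torusInt`) turns every question into one about functions of `P` alone.

Existence. Let `J` be the Jacobian determinant of `σ⁻¹`. It suffices to find a germ `η` with
Jacobian determinant `J` and `P ∘ η = ψ ∘ P`: then `Φ = σ⁻¹ ∘ η⁻¹` preserves volume and
`Ψ = ψ⁻¹` works (`exists_normal_form`). If `A` is the average of `J` over the circle generated by
`D_k`, then `J = A (1 + D_k v)` for some analytic `v` (`average_step`), and this is the Jacobian
determinant, relative to the density `A`, of the map multiplying `z_k` by `exp v` and `z_o` by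
`exp (-v)` (`shear`), which preserves `P`. Treating all `k` in turn reduces to a `J` invariant under
every `D_k`. Such a `J` equals `j ∘ P` (`exists_factor_prod`), and if `ψ` is the primitive of `j`,
written `ψ t = t exp (l t)`, then multiplying the single coordinate `z_o` by `exp (l (P z))` gives
`η` (`exists_eta`).

Uniqueness. Two normal forms differ by a volume-preserving `χ` with `P ∘ χ = ψ ∘ P`. The germ `χ`
maps the coordinate hyperplanes to each other, so up to a permutation `τ` it multiplies the
coordinates by units `exp (v_j z)` (`exists_perm_exp`). Composing such a map with shears moves all
the exponents to the coordinate `o`, and changes the Jacobian determinant only by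
torus-exact terms, that is, sums of functions `D_k K_k` (`isTorusExact_shear`). A map multiplying
only `z_o` has Jacobian determinant `ψ' ∘ P`. Hence `sign τ - ψ' ∘ P` is torus-exact
(`isTorusExact_det`), and averaging over the circles shows that it is zero
(`isTorusExact_prod_eq_zero`). So `ψ t = ± t`.
-/

open Filter Topology

/-- Wirtinger derivative ∂/∂z_j of a (complex-valued) function at `p`:
`(1/2)(∂F/∂x_j − i ∂F/∂y_j)`. -/
noncomputable def wirtZ {n : ℕ} (F : (Fin n → ℂ) → ℂ) (j : Fin n) (p : Fin n → ℂ) : ℂ :=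
  (fderiv ℝ F p (Pi.single j 1) - Complex.I * fderiv ℝ F p (Pi.single j Complex.I)) / 2

/-- Wirtinger derivative ∂/∂z̄_j of a (complex-valued) function at `p`:
`(1/2)(∂F/∂x_j + i ∂F/∂y_j)`. -/
noncomputable def wirtZbar {n : ℕ} (F : (Fin n → ℂ) → ℂ) (j : Fin n) (p : Fin n → ℂ) : ℂ :=
  (fderiv ℝ F p (Pi.single j 1) + Complex.I * fderiv ℝ F p (Pi.single j Complex.I)) / 2

/-- The germ `M = {F = 0}` at `0` is Levi-flat: for every point `p` of `M* = M \ Sing(M)`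
near `0` and every `v` with `Σ_j F_{z_j}(p) v_j = 0` one has
`Σ_{i,j} F_{z_i z̄_j}(p) v_i conj(v_j) = 0`. -/
def LeviFlatGerm {n : ℕ} (F : (Fin n → ℂ) → ℝ) : Prop :=
  ∀ᶠ p in 𝓝 (0 : Fin n → ℂ), F p = 0 → fderiv ℝ F p ≠ 0 →
    ∀ v : Fin n → ℂ,
      (∑ j, wirtZ (fun z => ((F z : ℝ) : ℂ)) j p * v j) = 0 →
      (∑ i, ∑ j, wirtZbar (wirtZ (fun z => ((F z : ℝ) : ℂ)) i) j p * v i * (starRingEnd ℂ) (v j)) = 0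

/-- `F` is irreducible in the ring of germs at `0` of real-valued real-analytic functions:
in any factorization `F = g·h` one of the factors is a unit (i.e. does not vanish at `0`). -/
def IrreducibleRGerm {n : ℕ} (F : (Fin n → ℂ) → ℝ) : Prop :=
  ∀ g h : (Fin n → ℂ) → ℝ, AnalyticAt ℝ g 0 → AnalyticAt ℝ h 0 →
    (∀ᶠ z in 𝓝 (0 : Fin n → ℂ), F z = g z * h z) → g 0 ≠ 0 ∨ h 0 ≠ 0

/-- `φ` is a germ of biholomorphism `(ℂⁿ,0) → (ℂⁿ,0)` with local inverse `ι`. -/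
def IsGermBiholo {n : ℕ} (φ ι : (Fin n → ℂ) → (Fin n → ℂ)) : Prop :=
  AnalyticAt ℂ φ 0 ∧ AnalyticAt ℂ ι 0 ∧ φ 0 = 0 ∧ ι 0 = 0 ∧
  (∀ᶠ z in 𝓝 (0 : Fin n → ℂ), ι (φ z) = z) ∧ (∀ᶠ z in 𝓝 (0 : Fin n → ℂ), φ (ι z) = z)

/-- `φ` is volume-preserving (isochore): the determinant of its complex Jacobian is
identically `1` near `0`. -/
def IsVolumePreserving {n : ℕ} (φ : (Fin n → ℂ) → (Fin n → ℂ)) : Prop :=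
  ∀ᶠ z in 𝓝 (0 : Fin n → ℂ), LinearMap.det ((fderiv ℂ φ z).toLinearMap) = 1

/-- `ψ` is a germ of automorphism of `(ℂ,0)`. -/
def IsGermAuto (ψ : ℂ → ℂ) : Prop :=
  AnalyticAt ℂ ψ 0 ∧ ψ 0 = 0 ∧ deriv ψ 0 ≠ 0

section

variable {n : ℕ}

/-! ### Integrals along curves of diagonal maps -/

/-- The integral over `θ ∈ [0, 2π]` of `J` along the curve `a θ * z`, with weight `w`. The product
`a θ * z` is coordinatewise, so `a` is a curve of diagonal maps. -/
noncomputable def torusInt (w : ℝ → ℂ) (a : ℝ → Fin n → ℂ) (J : (Fin n → ℂ) → ℂ)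
    (z : Fin n → ℂ) : ℂ :=
  ∫ θ in (0 : ℝ)..(2 * Real.pi), w θ * J (a θ * z)

/-- Analyticity is proved by integrating the power series of `J` term by term; the bound `‖a θ‖ ≤ 1`
keeps the radius of convergence. -/
theorem torusInt_analyticAt {w : ℝ → ℂ} {a : ℝ → Fin n → ℂ} {J : (Fin n → ℂ) → ℂ}
    (hw : Continuous w) (ha : Continuous a) (ha1 : ∀ θ, ‖a θ‖ ≤ 1) (hJ : AnalyticAt ℂ J 0) :
    AnalyticAt ℂ (torusInt w a J) 0 := by
  obtain ⟨p, R, hp⟩ := hJ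
  obtain ⟨r, hr0, hrR⟩ := ENNReal.lt_iff_exists_nnreal_btwn.1 hp.r_pos
  have hr0' : 0 < r := by exact_mod_cast hr0
  set L : ℝ → (Fin n → ℂ) →L[ℂ] (Fin n → ℂ) := fun θ => ContinuousLinearMap.mul ℂ _ (a θ)
  have hLc : Continuous L := (ContinuousLinearMap.mul ℂ (Fin n → ℂ)).continuous.comp ha
  have hL1 : ∀ θ, ‖L θ‖ ≤ 1 := fun θ =>
    (ContinuousLinearMap.opNorm_mul_apply_le ℂ _ (a θ)).trans (ha1 θ)
  obtain ⟨W, hW⟩ : ∃ W, ∀ θ ∈ Set.uIcc (0 : ℝ) (2 * Real.pi), ‖w θ‖ ≤ W :=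
    isCompact_uIcc.exists_bound_of_continuousOn hw.continuousOn
  have hW0 : 0 ≤ W := (norm_nonneg _).trans (hW 0 Set.left_mem_uIcc)
  let c : ∀ m : ℕ, ℝ → ContinuousMultilinearMap ℂ (fun _ : Fin m => Fin n → ℂ) ℂ :=
    fun m θ => w θ • (p m).compContinuousLinearMap (fun _ => L θ)
  have hcc : ∀ m, Continuous (c m) := by
    intro m
    refine hw.smul ?_
    have h1 := (ContinuousMultilinearMap.compContinuousLinearMapContinuousMultilinear ℂ
      (fun _ : Fin m => Fin n → ℂ) (fun _ : Fin m => Fin n → ℂ) ℂ).cont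
    have h2 : Continuous fun θ : ℝ => (fun _ : Fin m => L θ) := continuous_pi fun _ => hLc
    exact (h1.comp h2).clm_apply continuous_const
  have hcb : ∀ m, ∀ θ ∈ Set.uIcc (0 : ℝ) (2 * Real.pi), ‖c m θ‖ ≤ W * ‖p m‖ := by
    intro m θ hθ
    rw [norm_smul]
    refine mul_le_mul (hW θ hθ) ?_ (norm_nonneg _) hW0
    refine ((p m).norm_compContinuousLinearMap_le _).trans ?_
    refine mul_le_of_le_one_right (norm_nonneg _) ?_
    exact Finset.prod_le_one (fun _ _ => norm_nonneg _) (fun _ _ => hL1 θ)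
  let q : FormalMultilinearSeries ℂ (Fin n → ℂ) ℂ :=
    fun m => ∫ θ in (0 : ℝ)..(2 * Real.pi), c m θ
  have hqb : ∀ m, ‖q m‖ ≤ W * ‖p m‖ * (2 * Real.pi) := by
    intro m
    have := intervalIntegral.norm_integral_le_of_norm_le_const (a := 0) (b := 2 * Real.pi)
      (f := c m) (C := W * ‖p m‖) (fun θ hθ => hcb m θ (Set.uIoc_subset_uIcc hθ))
    rwa [sub_zero, abs_of_pos Real.two_pi_pos] at this
  have hsum : Summable fun m => ‖p m‖ * (r : ℝ) ^ m :=
    p.summable_norm_mul_pow (hrR.trans_le hp.r_le)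
  refine ⟨q, r, ?_, by exact_mod_cast hr0', ?_⟩
  · refine q.le_radius_of_summable (Summable.of_nonneg_of_le (fun m => by positivity)
      (fun m => ?_) (hsum.mul_left (W * (2 * Real.pi))))
    have h := mul_le_mul_of_nonneg_right (hqb m) (pow_nonneg r.coe_nonneg m)
    linarith
  · intro y hy
    have hyr : ‖y‖ < r := by simpa [Metric.mem_eball, edist_eq_enorm_sub, enorm_eq_nnnorm, ← NNReal.coe_lt_coe] using hy
    rw [zero_add]
    have hq : ∀ m, q m (fun _ => y) = ∫ θ in (0 : ℝ)..(2 * Real.pi), w θ * p m (fun _ => a θ * y) := by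
      intro m
      have := (ContinuousMultilinearMap.apply ℂ (fun _ : Fin m => Fin n → ℂ) ℂ
        (fun _ => y)).intervalIntegral_comp_comm (μ := MeasureTheory.volume)
          ((hcc m).intervalIntegrable 0 (2 * Real.pi))
      exact this.symm
    simp_rw [hq]
    refine intervalIntegral.hasSum_integral_of_dominated_convergence
      (fun m _ => W * (‖p m‖ * (r : ℝ) ^ m)) ?_ ?_ ?_ ?_ ?_
    · intro m
      refine (hw.mul ((p m).cont.comp ?_)).aestronglyMeasurable
      exact continuous_pi fun _ => ha.mul continuous_const
    · intro m
      refine Eventually.of_forall fun θ hθ => ?_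
      rw [norm_mul]
      refine mul_le_mul (hW θ (Set.uIoc_subset_uIcc hθ)) ?_ (norm_nonneg _) hW0
      refine ((p m).le_opNorm _).trans (mul_le_mul_of_nonneg_left ?_ (norm_nonneg _))
      rw [Finset.prod_const, Finset.card_univ, Fintype.card_fin]
      gcongr
      exact (norm_mul_le _ _).trans ((mul_le_of_le_one_left (norm_nonneg _) (ha1 θ)).trans hyr.le)
    · exact Eventually.of_forall fun θ _ => hsum.mul_left W
    · exact continuous_const.intervalIntegrable _ _
    · refine Eventually.of_forall fun θ _ => ?_
      have hmem : a θ * y ∈ Metric.eball (0 : Fin n → ℂ) R := by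
        have h1 : ‖a θ * y‖ < r :=
          ((norm_mul_le _ _).trans (mul_le_of_le_one_left (norm_nonneg _) (ha1 θ))).trans_lt hyr
        rw [Metric.mem_eball, edist_eq_enorm_sub, sub_zero, enorm_eq_nnnorm]
        refine lt_trans ?_ hrR
        exact_mod_cast h1
      simpa using (hp.hasSum hmem).mul_left (w θ)

/-- The Euler operator `z_i ∂/∂z_i` applied to `J`, evaluated at `z`. -/
noncomputable def eul (J : (Fin n → ℂ) → ℂ) (i : Fin n) (z : Fin n → ℂ) : ℂ :=
  z i * fderiv ℂ J z (Pi.single i 1)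

theorem exists_ball_analytic {F : Type*} [NormedAddCommGroup F] [NormedSpace ℂ F] [CompleteSpace F]
    {J : (Fin n → ℂ) → F} (hJ : AnalyticAt ℂ J 0) :
    ∃ r > 0, ∀ z, ‖z‖ < r → AnalyticAt ℂ J z := by
  obtain ⟨r, hr, h⟩ := Metric.eventually_nhds_iff.1 hJ.eventually_analyticAt
  exact ⟨r, hr, fun z hz => h (by simpa using hz)⟩

theorem eventually_exists_ball {P : (Fin n → ℂ) → Prop} (hP : ∀ᶠ z in 𝓝 (0 : Fin n → ℂ), P z) :
    ∃ r > 0, ∀ z, ‖z‖ < r → P z := by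
  obtain ⟨r, hr, h⟩ := Metric.eventually_nhds_iff.1 hP
  exact ⟨r, hr, fun z hz => h (by simpa using hz)⟩

theorem eventually_of_ball {P : (Fin n → ℂ) → Prop} {r : ℝ} (hr : 0 < r)
    (h : ∀ z, ‖z‖ < r → P z) : ∀ᶠ z in 𝓝 (0 : Fin n → ℂ), P z :=
  Metric.eventually_nhds_iff.2 ⟨r, hr, fun z hz => h _ (by simpa using hz)⟩

theorem norm_mul_lt_of_norm_le_one {a z : Fin n → ℂ} {r : ℝ} (ha : ‖a‖ ≤ 1) (hz : ‖z‖ < r) :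
    ‖a * z‖ < r :=
  ((norm_mul_le _ _).trans (mul_le_of_le_one_left (norm_nonneg _) ha)).trans_lt hz

/-- Diagonal maps commute with the Euler operators, so these may be moved under the integral. -/
theorem eul_torusInt {w : ℝ → ℂ} {a : ℝ → Fin n → ℂ} {J : (Fin n → ℂ) → ℂ}
    (hw : Continuous w) (ha : Continuous a) (ha1 : ∀ θ, ‖a θ‖ ≤ 1) (hJ : AnalyticAt ℂ J 0) :
    ∀ᶠ z in 𝓝 (0 : Fin n → ℂ), ∀ i, eul (torusInt w a J) i z = torusInt w a (eul J i) z := by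
  obtain ⟨r, hr, hJr⟩ := exists_ball_analytic hJ
  have hcJ : ContinuousAt (fderiv ℂ J) 0 := hJ.fderiv.continuousAt
  obtain ⟨r', hr', hbd⟩ := eventually_exists_ball
    (hcJ.norm.eventually_lt (continuousAt_const (y := ‖fderiv ℂ J 0‖ + 1)) (by simp))
  refine eventually_of_ball (lt_min hr hr') fun z hz i => ?_
  have key : HasFDerivAt (torusInt w a J) (∫ θ in (0 : ℝ)..(2 * Real.pi),
      w θ • (fderiv ℂ J (a θ * z)).comp (ContinuousLinearMap.mul ℂ _ (a θ))) z := by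
    have hcont : ∀ x, ‖x‖ < min r r' → Continuous fun θ => w θ * J (a θ * x) := by
      intro x hx
      refine hw.mul (continuous_iff_continuousAt.2 fun θ => ?_)
      exact ContinuousAt.comp (f := fun θ => a θ * x) (g := J)
        (hJr _ (norm_mul_lt_of_norm_le_one (ha1 θ) (hx.trans_le (min_le_left _ _)))).continuousAt
        (ha.mul continuous_const).continuousAt
    refine intervalIntegral.hasFDerivAt_integral_of_dominated_of_fderiv_le
      (bound := fun θ => ‖w θ‖ * (‖fderiv ℂ J 0‖ + 1))
      (F' := fun z θ => w θ • (fderiv ℂ J (a θ * z)).comp (ContinuousLinearMap.mul ℂ _ (a θ)))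
      (s := Metric.ball 0 (min r r'))
      (Metric.isOpen_ball.mem_nhds (by simpa using hz)) ?_ ?_ ?_ ?_ ?_ ?_
    · filter_upwards [Metric.isOpen_ball.mem_nhds (show z ∈ Metric.ball 0 (min r r') by simpa using hz)]
        with x hx
      exact (hcont x (by simpa using hx)).aestronglyMeasurable
    · exact (hcont z hz).intervalIntegrable _ _
    · refine Continuous.aestronglyMeasurable (hw.smul (Continuous.clm_comp ?_ ?_))
      · refine continuous_iff_continuousAt.2 fun θ => ?_
        exact ContinuousAt.comp (f := fun θ => a θ * z) (g := fderiv ℂ J)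
          (hJr _ (norm_mul_lt_of_norm_le_one (ha1 θ) (hz.trans_le (min_le_left _ _)))).fderiv.continuousAt
          (ha.mul continuous_const).continuousAt
      · exact (ContinuousLinearMap.mul ℂ (Fin n → ℂ)).continuous.comp ha
    · refine Eventually.of_forall fun θ _ x hx => ?_
      rw [norm_smul]
      refine mul_le_mul_of_nonneg_left ?_ (norm_nonneg _)
      refine (ContinuousLinearMap.opNorm_comp_le _ _).trans ?_
      refine (mul_le_of_le_one_right (norm_nonneg _)
        ((ContinuousLinearMap.opNorm_mul_apply_le ℂ _ (a θ)).trans (ha1 θ))).trans ?_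
      have hx' : ‖x‖ < min r r' := by simpa using hx
      exact (hbd _ (norm_mul_lt_of_norm_le_one (ha1 θ) (hx'.trans_le (min_le_right _ _)))).le
    · exact (hw.norm.mul continuous_const).intervalIntegrable _ _
    · refine Eventually.of_forall fun θ _ x hx => ?_
      have hx' : ‖x‖ < min r r' := by simpa using hx
      have h1 : HasFDerivAt J (fderiv ℂ J (a θ * x)) (ContinuousLinearMap.mul ℂ _ (a θ) x) :=
        (hJr _ (norm_mul_lt_of_norm_le_one (ha1 θ)
          (hx'.trans_le (min_le_left _ _)))).differentiableAt.hasFDerivAt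
      exact (h1.comp x (ContinuousLinearMap.mul ℂ _ (a θ)).hasFDerivAt).const_smul (w θ)
  rw [eul, key.fderiv, ContinuousLinearMap.intervalIntegral_apply, torusInt,
    ← intervalIntegral.integral_const_mul]
  · refine intervalIntegral.integral_congr fun θ _ => ?_
    have h2 : a θ * Pi.single i (1 : ℂ) = a θ i • Pi.single i (1 : ℂ) := by
      ext j
      by_cases hj : j = i
      · subst hj; simp
      · simp [hj]
    simp [eul, h2]
    ring
  · refine Continuous.intervalIntegrable (hw.smul (Continuous.clm_comp ?_ ?_)) _ _
    · refine continuous_iff_continuousAt.2 fun θ => ?_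
      exact ContinuousAt.comp (f := fun θ => a θ * z) (g := fderiv ℂ J)
        (hJr _ (norm_mul_lt_of_norm_le_one (ha1 θ) (hz.trans_le (min_le_left _ _)))).fderiv.continuousAt
        (ha.mul continuous_const).continuousAt
    · exact (ContinuousLinearMap.mul ℂ (Fin n → ℂ)).continuous.comp ha

/-! ### Circle actions preserving the product of the coordinates -/

theorem fderiv_eq_sum (L : (Fin n → ℂ) →L[ℂ] ℂ) (v : Fin n → ℂ) :
    L v = ∑ i, v i * L (Pi.single i 1) := by
  conv_lhs => rw [pi_eq_sum_univ' v]
  simp [map_sum]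

/-- The derivative of `J` along the flow of the linear field `∑ i, c i • z_i ∂/∂z_i`. -/
theorem hasDerivAt_flow {J : (Fin n → ℂ) → ℂ} (c z : Fin n → ℂ) (s : ℝ)
    (hJ : DifferentiableAt ℂ J (fun i => Complex.exp (s * c i) * z i)) :
    HasDerivAt (fun s : ℝ => J (fun i => Complex.exp (s * c i) * z i))
      (∑ i, c i * eul J i (fun i => Complex.exp (s * c i) * z i)) s := by
  have h1 : HasDerivAt (fun s : ℂ => (fun i => Complex.exp (s * c i) * z i : Fin n → ℂ))
      (fun i => Complex.exp (s * c i) * c i * z i) (s : ℂ) := by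
    rw [hasDerivAt_pi]
    intro i
    have := (((hasDerivAt_id (s : ℂ)).mul_const (c i)).cexp).mul_const (z i)
    simpa using this
  have h2 := (hJ.hasFDerivAt.comp_hasDerivAt (s : ℂ) h1).comp_ofReal
  refine h2.congr_deriv ?_
  rw [fderiv_eq_sum]
  refine Finset.sum_congr rfl fun i _ => ?_
  simp only [eul]
  ring

/-- If `∑ i, c i • z_i ∂/∂z_i` kills `J` along an orbit segment of its flow, then `J` takes the same
value at both ends. -/
theorem flow_const {J : (Fin n → ℂ) → ℂ} (c z : Fin n → ℂ)
    (hJ : ∀ s : ℝ, s ∈ Set.Icc (0 : ℝ) 1 →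
      DifferentiableAt ℂ J (fun i => Complex.exp (s * c i) * z i))
    (h0 : ∀ s : ℝ, s ∈ Set.Icc (0 : ℝ) 1 →
      ∑ i, c i * eul J i (fun i => Complex.exp (s * c i) * z i) = 0) :
    J (fun i => Complex.exp (c i) * z i) = J z := by
  have := constant_of_has_deriv_right_zero (a := 0) (b := 1)
    (f := fun s : ℝ => J (fun i => Complex.exp (s * c i) * z i))
    (fun s hs => (hasDerivAt_flow c z s (hJ s hs)).continuousAt.continuousWithinAt)
    (fun s hs => by
      have hs' : s ∈ Set.Icc (0 : ℝ) 1 := ⟨hs.1, hs.2.le⟩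
      have := (hasDerivAt_flow c z s (hJ s hs')).hasDerivWithinAt (s := Set.Ici s)
      rwa [h0 s hs'] at this) 1 (by simp)
  simpa using this

/-- The circle action multiplying `z_k` by `exp (iθ)` and `z_o` by `exp (-iθ)`; it is trivial when
`k = o`. It preserves the product of the coordinates. -/
noncomputable def rot (o k : Fin n) (θ : ℝ) : Fin n → ℂ :=
  fun i => Complex.exp (θ * (((Pi.single k 1 - Pi.single o 1 : Fin n → ℂ) i) * Complex.I))

theorem rot_continuous (o k : Fin n) : Continuous (rot o k) := by
  unfold rot; fun_prop

theorem rot_norm (o k : Fin n) (θ : ℝ) : ‖rot o k θ‖ ≤ 1 := by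
  refine (pi_norm_le_iff_of_nonneg zero_le_one).2 fun i => le_of_eq ?_
  have : (θ * (((Pi.single k 1 - Pi.single o 1 : Fin n → ℂ) i) * Complex.I))
      = ((θ * ((Pi.single k 1 - Pi.single o 1 : Fin n → ℝ) i) : ℝ) : ℂ) * Complex.I := by
    simp only [Pi.sub_apply, Pi.single_apply]
    split_ifs <;> push_cast <;> ring
  rw [rot, this, Complex.norm_exp_ofReal_mul_I]

theorem rot_zero (o k : Fin n) : rot o k 0 = 1 := by ext; simp [rot]

theorem rot_two_pi (o k : Fin n) : rot o k (2 * Real.pi) = 1 := by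
  ext i
  simp only [rot, Pi.sub_apply, Pi.single_apply, Pi.one_apply, Complex.exp_eq_one_iff]
  split_ifs
  · exact ⟨0, by simp⟩
  · exact ⟨1, by push_cast; ring⟩
  · exact ⟨-1, by push_cast; ring⟩
  · exact ⟨0, by simp⟩

theorem hasDerivAt_rot {J : (Fin n → ℂ) → ℂ} (o k : Fin n) (z : Fin n → ℂ) (θ : ℝ)
    (hJ : DifferentiableAt ℂ J (rot o k θ * z)) :
    HasDerivAt (fun θ : ℝ => J (rot o k θ * z))
      (Complex.I * (eul J k (rot o k θ * z) - eul J o (rot o k θ * z))) θ := by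
  refine (hasDerivAt_flow (fun i => (Pi.single k 1 - Pi.single o 1 : Fin n → ℂ) i * Complex.I)
    z θ hJ).congr_deriv ?_
  simp only [Pi.sub_apply, Pi.single_apply, sub_mul, Finset.sum_sub_distrib, ite_mul, one_mul,
    zero_mul, Finset.sum_ite_eq', Finset.mem_univ, if_true]
  simp only [rot, Pi.sub_apply, Pi.single_apply, sub_mul, Pi.mul_def, ite_mul, one_mul,
    zero_mul]
  ring

/-- Integration by parts over one period of the circle action `rot o k`. -/
theorem torusInt_eul_sub {w w' : ℝ → ℂ} (hw : ∀ θ, HasDerivAt w (w' θ) θ) (hw' : Continuous w')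
    {J : (Fin n → ℂ) → ℂ} (hJ : AnalyticAt ℂ J 0) (o k : Fin n) :
    ∀ᶠ z in 𝓝 (0 : Fin n → ℂ),
      torusInt w (rot o k) (eul J k) z - torusInt w (rot o k) (eul J o) z =
        -Complex.I * ((w (2 * Real.pi) - w 0) * J z - torusInt w' (rot o k) J z) := by
  obtain ⟨r, hr, hJr⟩ := exists_ball_analytic hJ
  refine eventually_of_ball hr fun z hz => ?_
  have han : ∀ θ, AnalyticAt ℂ J (rot o k θ * z) := fun θ =>
    hJr _ (norm_mul_lt_of_norm_le_one (rot_norm o k θ) hz)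
  have hrc : Continuous fun θ => rot o k θ * z := (rot_continuous o k).mul continuous_const
  have hwc : Continuous w := continuous_iff_continuousAt.2 fun θ => (hw θ).continuousAt
  have hec : ∀ i, Continuous fun θ => eul J i (rot o k θ * z) := by
    intro i
    unfold eul
    refine Continuous.mul ((continuous_apply i).comp hrc) (Continuous.clm_apply ?_ continuous_const)
    refine continuous_iff_continuousAt.2 fun θ => ?_
    exact ContinuousAt.comp (f := fun θ => rot o k θ * z) (g := fderiv ℂ J)
      (han θ).fderiv.continuousAt hrc.continuousAt
  have hIBP := intervalIntegral.integral_mul_deriv_eq_deriv_mul (a := 0) (b := 2 * Real.pi)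
    (u := w) (u' := w') (fun θ _ => hw θ)
    (fun θ _ => hasDerivAt_rot o k z θ (han θ).differentiableAt)
    (hw'.intervalIntegrable _ _)
    ((continuous_const.mul ((hec k).sub (hec o))).intervalIntegrable _ _)
  rw [rot_zero, rot_two_pi, one_mul] at hIBP
  unfold torusInt
  have hint : ∀ i, IntervalIntegrable (fun θ => w θ * eul J i (rot o k θ * z))
      MeasureTheory.volume 0 (2 * Real.pi) := fun i => (hwc.mul (hec i)).intervalIntegrable _ _
  rw [← intervalIntegral.integral_sub (hint k) (hint o)]
  have h3 : ∫ θ in (0 : ℝ)..(2 * Real.pi),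
      w θ * (Complex.I * (eul J k (rot o k θ * z) - eul J o (rot o k θ * z))) =
      Complex.I * ∫ θ in (0 : ℝ)..(2 * Real.pi),
        (w θ * eul J k (rot o k θ * z) - w θ * eul J o (rot o k θ * z)) := by
    rw [← intervalIntegral.integral_const_mul]
    refine intervalIntegral.integral_congr fun θ _ => ?_
    ring
  rw [h3] at hIBP
  linear_combination (-Complex.I) * hIBP + (∫ θ in (0 : ℝ)..(2 * Real.pi),
        (w θ * eul J k (rot o k θ * z) - w θ * eul J o (rot o k θ * z))) * Complex.I_mul_I

/-! ### Shears and the averaging step -/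

/-- The map multiplying the `i`-th coordinate by `exp (v z * ε i)`. When `∑ i, ε i = 0` it preserves
the product of the coordinates. -/
noncomputable def shear (ε : Fin n → ℂ) (v : (Fin n → ℂ) → ℂ) (z : Fin n → ℂ) : Fin n → ℂ :=
  fun i => Complex.exp (v z * ε i) * z i

theorem shear_analyticAt (ε : Fin n → ℂ) {v : (Fin n → ℂ) → ℂ} {z : Fin n → ℂ}
    (hv : AnalyticAt ℂ v z) : AnalyticAt ℂ (shear ε v) z := by
  refine analyticAt_pi_iff.2 fun i => ?_
  exact ((hv.mul analyticAt_const).cexp).mul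
    ((ContinuousLinearMap.proj (R := ℂ) (φ := fun _ : Fin n => ℂ) i).analyticAt z)

theorem shear_zero (ε : Fin n → ℂ) (v : (Fin n → ℂ) → ℂ) : shear ε v 0 = 0 := by
  ext; simp [shear]

theorem prod_shear (ε : Fin n → ℂ) (v : (Fin n → ℂ) → ℂ) (z : Fin n → ℂ) :
    ∏ i, shear ε v z i = Complex.exp (v z * ∑ i, ε i) * ∏ i, z i := by
  simp [shear, Finset.prod_mul_distrib, Finset.mul_sum, Complex.exp_sum]

/-- The derivative of a shear is a rank-one perturbation of a diagonal matrix, so the matrix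
determinant lemma applies. -/
theorem shear_det (ε : Fin n → ℂ) {v : (Fin n → ℂ) → ℂ} {z : Fin n → ℂ}
    (hv : DifferentiableAt ℂ v z) :
    LinearMap.det ((fderiv ℂ (shear ε v) z).toLinearMap) =
      Complex.exp (v z * ∑ i, ε i) * (1 + ∑ i, ε i * eul v i z) := by
  have h : ∀ i, HasFDerivAt (fun z => shear ε v z i)
      (Complex.exp (v z * ε i) • ContinuousLinearMap.proj (R := ℂ) (φ := fun _ : Fin n => ℂ) i +
        z i • Complex.exp (v z * ε i) • ε i • fderiv ℂ v z) z := fun i =>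
    ((hv.hasFDerivAt.mul_const (ε i)).cexp).mul
      (ContinuousLinearMap.proj (R := ℂ) (φ := fun _ : Fin n => ℂ) i).hasFDerivAt
  rw [(hasFDerivAt_pi.2 h).fderiv, ← LinearMap.det_toMatrix']
  have hM : LinearMap.toMatrix' (ContinuousLinearMap.pi fun i =>
      (Complex.exp (v z * ε i) • ContinuousLinearMap.proj (R := ℂ) (φ := fun _ : Fin n => ℂ) i +
        z i • Complex.exp (v z * ε i) • ε i • fderiv ℂ v z)).toLinearMap =
      Matrix.diagonal (fun i => Complex.exp (v z * ε i)) *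
        (1 + Matrix.replicateCol Unit (fun i => z i * ε i) *
          Matrix.replicateRow Unit (fun j => fderiv ℂ v z (Pi.single j 1))) := by
    ext i j
    rw [Matrix.diagonal_mul]
    simp [LinearMap.toMatrix'_apply, Matrix.mul_apply, Matrix.one_apply, Pi.single_apply]
    split_ifs <;> ring
  rw [hM, Matrix.det_mul, Matrix.det_diagonal, Matrix.det_one_add_replicateCol_mul_replicateRow,
    Finset.mul_sum, Complex.exp_sum]
  congr 2
  simp only [dotProduct, eul]
  exact Finset.sum_congr rfl fun i _ => by ring

/-- A function invariant under `E_k - E_o` is unchanged by shears in that direction: a shear moves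
every point along the corresponding orbit. -/
theorem comp_shear_eq (o k : Fin n) {A v : (Fin n → ℂ) → ℂ} (hA : AnalyticAt ℂ A 0)
    (hv : AnalyticAt ℂ v 0) (hinv : ∀ᶠ z in 𝓝 (0 : Fin n → ℂ), eul A k z = eul A o z) :
    ∀ᶠ z in 𝓝 (0 : Fin n → ℂ), A (shear (Pi.single k 1 - Pi.single o 1) v z) = A z := by
  obtain ⟨r, hr, hAr⟩ := eventually_exists_ball (hA.eventually_analyticAt.and hinv)
  have hvb : ∀ᶠ z in 𝓝 (0 : Fin n → ℂ), ‖v z‖ < ‖v 0‖ + 1 :=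
    hv.continuousAt.norm.eventually_lt continuousAt_const (by simp)
  have hsm : ∀ᶠ z in 𝓝 (0 : Fin n → ℂ), Real.exp (‖v 0‖ + 1) * ‖z‖ < r := by
    have : ContinuousAt (fun z : Fin n → ℂ => Real.exp (‖v 0‖ + 1) * ‖z‖) 0 := by fun_prop
    exact this.eventually_lt continuousAt_const (by simpa using hr)
  filter_upwards [hvb, hsm] with z hz hz2
  have hin : ∀ s ∈ Set.Icc (0 : ℝ) 1, ‖(fun i => Complex.exp (s * (v z *
      (Pi.single k 1 - Pi.single o 1 : Fin n → ℂ) i)) * z i : Fin n → ℂ)‖ < r := by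
    intro s hs
    refine lt_of_le_of_lt ?_ hz2
    refine (pi_norm_le_iff_of_nonneg (by positivity)).2 fun i => ?_
    rw [norm_mul]
    refine mul_le_mul ?_ (norm_le_pi_norm z i) (norm_nonneg _) (Real.exp_pos _).le
    rw [Complex.norm_exp]
    refine Real.exp_le_exp.2 ((Complex.re_le_norm _).trans ?_)
    have h1 : ‖(Pi.single k 1 - Pi.single o 1 : Fin n → ℂ) i‖ ≤ 1 := by
      simp only [Pi.sub_apply, Pi.single_apply]
      split_ifs <;> simp
    rw [norm_mul, norm_mul, Complex.norm_real, Real.norm_of_nonneg hs.1]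
    calc s * (‖v z‖ * _) ≤ 1 * (‖v z‖ * 1) := by gcongr; exact hs.2
      _ ≤ _ := by linarith
  refine flow_const (fun i => v z * (Pi.single k 1 - Pi.single o 1 : Fin n → ℂ) i) z
    (fun s hs => (hAr _ (hin s hs)).1.differentiableAt) fun s hs => ?_
  have := (hAr _ (hin s hs)).2
  simp only [Pi.sub_apply, Pi.single_apply, mul_sub, sub_mul, Finset.sum_sub_distrib, ite_mul,
    mul_ite, mul_one, mul_zero, zero_mul, Finset.sum_ite_eq', Finset.mem_univ, if_true] at this ⊢
  rw [this, sub_self]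

theorem eul_mul {A B : (Fin n → ℂ) → ℂ} {z : Fin n → ℂ} (hA : DifferentiableAt ℂ A z)
    (hB : DifferentiableAt ℂ B z) (i : Fin n) :
    eul (fun z => A z * B z) i z = eul A i z * B z + A z * eul B i z := by
  have h := (hA.hasFDerivAt.mul hB.hasFDerivAt).fderiv
  unfold eul
  rw [show (fun z => A z * B z) = A * B from rfl, h]
  simp
  ring

theorem eul_congr {A B : (Fin n → ℂ) → ℂ} {z : Fin n → ℂ} (h : A =ᶠ[𝓝 z] B) (i : Fin n) :
    eul A i z = eul B i z := by
  rw [eul, eul, h.fderiv_eq]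

/-- `A` is the average of `J` over the circle `rot o k`, which inherits every invariance of `J`. With
`B` the integral of `J` against the weight `iθ / 2π`, integration by parts gives
`(E_k - E_o) B = J - A`; since `A` is invariant, `v = B / A` satisfies the last equation. -/
theorem average_step {o k : Fin n} {J : (Fin n → ℂ) → ℂ} (hJ : AnalyticAt ℂ J 0)
    (hJ0 : J 0 ≠ 0) :
    ∃ A v : (Fin n → ℂ) → ℂ, AnalyticAt ℂ A 0 ∧ AnalyticAt ℂ v 0 ∧ A 0 ≠ 0 ∧
      (∀ᶠ z in 𝓝 (0 : Fin n → ℂ), eul A k z = eul A o z) ∧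
      (∀ j, (∀ᶠ z in 𝓝 (0 : Fin n → ℂ), eul J j z = eul J o z) →
        ∀ᶠ z in 𝓝 (0 : Fin n → ℂ), eul A j z = eul A o z) ∧
      (∀ᶠ z in 𝓝 (0 : Fin n → ℂ), A z * (1 + (eul v k z - eul v o z)) = J z) := by
  have hpi : (Real.pi : ℂ) ≠ 0 := by exact_mod_cast Real.pi_ne_zero
  set w₀ : ℝ → ℂ := fun _ => 1 / (2 * Real.pi) with hw₀
  set w₁ : ℝ → ℂ := fun θ => Complex.I * (θ * (1 / (2 * Real.pi))) with hw₁
  have hw₀c : Continuous w₀ := continuous_const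
  have hw₁c : Continuous w₁ := by fun_prop
  have hd0 : ∀ θ, HasDerivAt w₀ 0 θ := fun θ => hasDerivAt_const _ _
  have hd1 : ∀ θ : ℝ, HasDerivAt w₁ (Complex.I * w₀ θ) θ := by
    intro θ
    have := ((Complex.ofRealCLM.hasDerivAt (x := θ)).mul_const
      (1 / (2 * Real.pi) : ℂ)).const_mul Complex.I
    simpa [hw₀, hw₁] using this
  set A := torusInt w₀ (rot o k) J
  set B := torusInt w₁ (rot o k) J
  have hA : AnalyticAt ℂ A 0 := torusInt_analyticAt hw₀c (rot_continuous o k) (rot_norm o k) hJ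
  have hB : AnalyticAt ℂ B 0 := torusInt_analyticAt hw₁c (rot_continuous o k) (rot_norm o k) hJ
  have hA0 : A 0 = J 0 := by
    simp only [A, torusInt, mul_zero, hw₀, intervalIntegral.integral_const, sub_zero]
    rw [Complex.real_smul]
    push_cast
    field_simp
  have hAinv : ∀ᶠ z in 𝓝 (0 : Fin n → ℂ), eul A k z = eul A o z := by
    filter_upwards [eul_torusInt hw₀c (rot_continuous o k) (rot_norm o k) hJ,
      torusInt_eul_sub hd0 continuous_const hJ o k] with z h1 h2
    rw [h1, h1, ← sub_eq_zero, h2]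
    simp [torusInt, hw₀]
  have hAne : ∀ᶠ z in 𝓝 (0 : Fin n → ℂ), A z ≠ 0 :=
    hA.continuousAt.eventually_ne (by rwa [hA0])
  refine ⟨A, fun z => B z / A z, hA, hB.div hA (by rwa [hA0]), by rwa [hA0], hAinv, ?_, ?_⟩
  · intro j hj
    obtain ⟨r, hr, hjr⟩ := eventually_exists_ball hj
    filter_upwards [eul_torusInt hw₀c (rot_continuous o k) (rot_norm o k) hJ,
      eventually_of_ball hr (P := fun z => ‖z‖ < r) fun z hz => hz] with z h1 hz
    rw [h1, h1]
    refine intervalIntegral.integral_congr fun θ _ => ?_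
    simp only [hjr _ (norm_mul_lt_of_norm_le_one (rot_norm o k θ) hz)]
  · filter_upwards [hAinv, hAne, eul_torusInt hw₁c (rot_continuous o k) (rot_norm o k) hJ,
      torusInt_eul_sub hd1 (continuous_const.mul hw₀c) hJ o k,
      hA.eventually_analyticAt, hB.eventually_analyticAt] with z h1 h2 h3 h4 hAz hBz
    have hprod : ∀ i, eul B i z = eul A i z * (B z / A z) + A z * eul (fun z => B z / A z) i z := by
      intro i
      have hq : AnalyticAt ℂ (fun z => B z / A z) z := hBz.div hAz h2
      rw [← eul_mul hAz.differentiableAt hq.differentiableAt]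
      refine eul_congr ?_ i
      filter_upwards [hAz.continuousAt.eventually_ne h2] with x hx
      field_simp
    have e1 := hprod k
    have e2 := hprod o
    rw [h3] at e1 e2
    have e5 : torusInt (fun θ => Complex.I * w₀ θ) (rot o k) J z = Complex.I * A z := by
      simp only [A, torusInt, ← intervalIntegral.integral_const_mul]
      refine intervalIntegral.integral_congr fun θ _ => ?_
      ring
    rw [e5] at h4
    have e4 : w₁ (2 * Real.pi) - w₁ 0 = Complex.I := by
      simp only [hw₁]
      push_cast
      field_simp
      ring
    rw [e4] at h4
    have hI := Complex.I_mul_I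
    linear_combination (-1 : ℂ) * e1 + e2 + h4 - (B z / A z) * h1 + (J z - A z) * (-1) * hI

/-! ### Functions of the product, and the prescribed Jacobian -/

theorem hasFDerivAt_prod_coord (z : Fin n → ℂ) :
    HasFDerivAt (fun z : Fin n → ℂ => ∏ i, z i)
      (∑ i, (∏ j ∈ Finset.univ.erase i, z j) •
        ContinuousLinearMap.proj (R := ℂ) (φ := fun _ : Fin n => ℂ) i) z :=
  HasFDerivAt.finsetProd (u := Finset.univ) (g := fun i (z : Fin n → ℂ) => z i)
    (fun i _ => (ContinuousLinearMap.proj (R := ℂ) (φ := fun _ : Fin n => ℂ) i).hasFDerivAt)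

theorem eul_prod (i : Fin n) (z : Fin n → ℂ) :
    eul (fun z => ∏ i, z i) i z = ∏ i, z i := by
  rw [eul, (hasFDerivAt_prod_coord z).fderiv]
  simp [Pi.single_apply, Finset.mul_prod_erase]

theorem eul_comp {g : ℂ → ℂ} {P : (Fin n → ℂ) → ℂ} {z : Fin n → ℂ}
    (hg : DifferentiableAt ℂ g (P z)) (hP : DifferentiableAt ℂ P z) (i : Fin n) :
    eul (fun z => g (P z)) i z = deriv g (P z) * eul P i z := by
  have := (hg.hasDerivAt.comp_hasFDerivAt z hP.hasFDerivAt).fderiv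
  rw [eul, show (fun z => g (P z)) = g ∘ P from rfl, this, eul]
  simp
  ring

theorem prod_analyticAt (z : Fin n → ℂ) : AnalyticAt ℂ (fun z : Fin n → ℂ => ∏ i, z i) z := by
  have := Finset.analyticAt_fun_prod (𝕜 := ℂ) (c := z) (Finset.univ : Finset (Fin n)) (f := fun i (z : Fin n → ℂ) => z i)
    (fun i _ => (ContinuousLinearMap.proj (R := ℂ) (φ := fun _ : Fin n => ℂ) i).analyticAt z)
  exact this

theorem prod_zero_eq (o : Fin n) : (∏ i, (0 : Fin n → ℂ) i) = 0 :=
  Finset.prod_eq_zero (Finset.mem_univ o) rfl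

/-- A function killed by all `E_k - E_o` is a function of the product of the coordinates. -/
theorem exists_factor_prod (o : Fin n) {J : (Fin n → ℂ) → ℂ} (hJ : AnalyticAt ℂ J 0)
    (hinv : ∀ k, ∀ᶠ z in 𝓝 (0 : Fin n → ℂ), eul J k z = eul J o z) :
    ∃ j : ℂ → ℂ, AnalyticAt ℂ j 0 ∧ ∀ᶠ z in 𝓝 (0 : Fin n → ℂ), J z = j (∏ i, z i) := by
  obtain ⟨r, hr, hJr⟩ := eventually_exists_ball
    (hJ.eventually_analyticAt.and (eventually_all.2 hinv))
  obtain ⟨ε, hε, hεr⟩ : ∃ ε, 0 < ε ∧ ε < r := exists_between hr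
  have hε' : (ε : ℂ) ≠ 0 := by exact_mod_cast hε.ne'
  set N := (Finset.univ.erase o).card
  -- `p t` is a point with product `t` whose coordinates other than `o` all equal `ε`.
  let p : ℂ → Fin n → ℂ := fun t => Function.update (fun _ => (ε : ℂ)) o (t / ε ^ N)
  have hp : AnalyticAt ℂ p 0 := by
    refine analyticAt_pi_iff.2 fun i => ?_
    by_cases hi : i = o
    · subst hi
      simp only [Function.update_self]
      exact analyticAt_id.div_const
    · simp only [Function.update_of_ne hi]
      exact analyticAt_const
  have hp0 : ‖p 0‖ < r := by
    refine lt_of_le_of_lt ((pi_norm_le_iff_of_nonneg hε.le).2 fun i => ?_) hεr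
    by_cases hi : i = o
    · subst hi; simp [p, hε.le]
    · simp [p, Function.update_of_ne hi, abs_of_pos hε]
  have hjan : AnalyticAt ℂ (fun t => J (p t)) 0 := (hJr _ hp0).1.comp hp
  refine ⟨fun t => J (p t), hjan, ?_⟩
  have hnz : ∀ z : Fin n → ℂ, ‖z‖ < ε → (∀ i, z i ≠ 0) → J z = J (p (∏ i, z i)) := by
    intro z hz hz0
    have hzi : ∀ i, ‖z i‖ ≤ ε := fun i => (norm_le_pi_norm z i).trans hz.le
    -- The diagonal flow with exponents `c`, of sum zero, moves `z` to `p (∏ i, z i)`. It enlarges the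
    -- coordinates other than `o` up to modulus `ε` and shrinks the
    -- coordinate `o`, so it stays in the ball.
    let c : Fin n → ℂ := Function.update (fun i => Complex.log (ε / z i)) o
      (-∑ i ∈ Finset.univ.erase o, Complex.log (ε / z i))
    have hco : c o = -∑ i ∈ Finset.univ.erase o, Complex.log (ε / z i) := by simp [c]
    have hci : ∀ i, i ≠ o → c i = Complex.log (ε / z i) := fun i hi => by
      simp [c, Function.update_of_ne hi]
    have hre : ∀ i, 0 ≤ (Complex.log (ε / z i)).re := by
      intro i
      rw [Complex.log_re]
      refine Real.log_nonneg ?_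
      rw [norm_div, Complex.norm_real, Real.norm_of_nonneg hε.le,
        one_le_div (norm_pos_iff.2 (hz0 i))]
      exact hzi i
    have hexp : ∀ i, Complex.exp (Complex.log (ε / z i)) = ε / z i := fun i =>
      Complex.exp_log (div_ne_zero hε' (hz0 i))
    have hsum : ∑ i, c i = 0 := by
      rw [← Finset.add_sum_erase _ _ (Finset.mem_univ o), hco,
        Finset.sum_congr rfl (fun i hi => hci i (Finset.ne_of_mem_erase hi)), neg_add_cancel]
    have hin : ∀ s ∈ Set.Icc (0 : ℝ) 1,
        ‖(fun i => Complex.exp (s * c i) * z i : Fin n → ℂ)‖ < r := by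
      intro s hs
      refine lt_of_le_of_lt ((pi_norm_le_iff_of_nonneg hε.le).2 fun i => ?_) hεr
      rw [norm_mul, Complex.norm_exp]
      by_cases hi : i = o
      · subst hi
        refine (mul_le_of_le_one_left (norm_nonneg _) (Real.exp_le_one_iff.2 ?_)).trans (hzi i)
        rw [Complex.re_ofReal_mul, hco, Complex.neg_re, Complex.re_sum]
        have := Finset.sum_nonneg (s := Finset.univ.erase i) fun j _ => hre j
        nlinarith [hs.1]
      · have h1 : Real.exp ((Complex.log (ε / z i)).re) * ‖z i‖ = ε := by
          rw [← Complex.norm_exp, hexp, norm_div, Complex.norm_real, Real.norm_of_nonneg hε.le,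
            div_mul_cancel₀ _ (norm_ne_zero_iff.2 (hz0 i))]
        refine le_trans ?_ h1.le
        refine mul_le_mul_of_nonneg_right (Real.exp_le_exp.2 ?_) (norm_nonneg _)
        rw [Complex.re_ofReal_mul, hci i hi]
        exact mul_le_of_le_one_left (hre i) hs.2
    have hfl := flow_const c z (fun s hs => (hJr _ (hin s hs)).1.differentiableAt) (fun s hs => by
      rw [Finset.sum_congr rfl fun i _ => by rw [(hJr _ (hin s hs)).2 i], ← Finset.sum_mul, hsum,
        zero_mul])
    rw [← hfl]
    congr 1
    ext i
    by_cases hi : i = o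
    · subst hi
      simp only [p, Function.update_self, hco, Complex.exp_neg, Complex.exp_sum, hexp]
      rw [Finset.prod_div_distrib, Finset.prod_const,
        ← Finset.mul_prod_erase _ _ (Finset.mem_univ i)]
      simp only [N]
      field_simp
    · simp only [p, Function.update_of_ne hi]
      rw [hci i hi, hexp, div_mul_cancel₀ _ (hz0 i)]
  -- both sides are continuous and the points with no vanishing coordinate are dense
  have hcomp : AnalyticAt ℂ (fun z : Fin n → ℂ => J (p (∏ i, z i))) 0 := by
    refine AnalyticAt.comp (g := fun t => J (p t)) (f := fun z : Fin n → ℂ => ∏ i, z i) ?_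
      (prod_analyticAt 0)
    rw [prod_zero_eq o]
    exact hjan
  obtain ⟨r₂, hr₂, hc₂⟩ := exists_ball_analytic hcomp
  have hδ : 0 < min ε r₂ := lt_min hε hr₂
  have hD : Dense {z : Fin n → ℂ | ∀ i, z i ≠ 0} := by
    have := dense_pi (Set.univ : Set (Fin n)) (s := fun _ => ({0}ᶜ : Set ℂ))
      (fun i _ => dense_compl_singleton (0 : ℂ))
    convert this using 1
    ext z
    simp [Set.mem_pi]
  have hEq : Set.EqOn J (fun z => J (p (∏ i, z i))) (Metric.ball 0 (min ε r₂)) := by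
    refine Set.EqOn.of_subset_closure (s := Metric.ball 0 (min ε r₂) ∩ {z : Fin n → ℂ | ∀ i, z i ≠ 0})
      (fun z hz => hnz z ?_ hz.2) ?_ ?_ Set.inter_subset_left
      (hD.open_subset_closure_inter Metric.isOpen_ball)
    · exact (mem_ball_zero_iff.1 hz.1).trans_le (min_le_left _ _)
    · intro z hz
      have hz' := (mem_ball_zero_iff.1 hz).trans_le (min_le_left _ _)
      exact (hJr z (hz'.trans hεr)).1.continuousAt.continuousWithinAt
    · intro z hz
      exact (hc₂ z ((mem_ball_zero_iff.1 hz).trans_le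
        (min_le_right _ _))).continuousAt.continuousWithinAt
  exact eventually_of_ball hδ fun z hz => hEq (mem_ball_zero_iff.2 hz)

/-- `ψ` is the primitive of `j` vanishing at `0`, and `exp ∘ l` is the unit `ψ t / t`. -/
theorem exists_primitive_log {j : ℂ → ℂ} (hj : AnalyticAt ℂ j 0) (hj0 : j 0 ≠ 0) :
    ∃ ψ l : ℂ → ℂ, AnalyticAt ℂ ψ 0 ∧ ψ 0 = 0 ∧ deriv ψ 0 ≠ 0 ∧ AnalyticAt ℂ l 0 ∧
      (∀ᶠ t in 𝓝 (0 : ℂ), Complex.exp (l t) * t = ψ t) ∧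
      (∀ᶠ t in 𝓝 (0 : ℂ), Complex.exp (l t) * (1 + deriv l t * t) = j t) := by
  obtain ⟨r, hr, hjr⟩ := Metric.eventually_nhds_iff_ball.1 hj.eventually_analyticAt
  obtain ⟨g, hg⟩ := (DifferentiableOn.isExactOn_ball (f := j) (c := 0) (r := r)
    fun z hz => (hjr z hz).differentiableAt.differentiableWithinAt)
  have hball : Metric.ball (0 : ℂ) r ∈ 𝓝 (0 : ℂ) := Metric.ball_mem_nhds _ hr
  set ψ : ℂ → ℂ := fun t => g t - g 0
  have hψd : ∀ t ∈ Metric.ball (0 : ℂ) r, HasDerivAt ψ (j t) t := fun t ht =>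
    (hg t ht).sub_const _
  have hψ : AnalyticAt ℂ ψ 0 :=
    DifferentiableOn.analyticAt (fun t ht => (hψd t ht).differentiableAt.differentiableWithinAt)
      hball
  have hψ0 : ψ 0 = 0 := by simp [ψ]
  have hψ' : deriv ψ 0 = j 0 := (hψd 0 (Metric.mem_ball_self hr)).deriv
  obtain ⟨q, hq⟩ := hψ
  have hh : AnalyticAt ℂ (dslope ψ 0) 0 := ⟨_, hq.has_fpower_series_dslope_fslope⟩
  set h := dslope ψ 0
  have hh0 : h 0 = j 0 := by simp [h, hψ']
  have hth : ∀ t, t * h t = ψ t := by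
    intro t
    have := sub_smul_dslope ψ 0 t
    simpa [hψ0] using this
  set l : ℂ → ℂ := fun t => Complex.log (j 0) + Complex.log (h t / j 0)
  have hl : AnalyticAt ℂ l 0 := by
    refine analyticAt_const.add (AnalyticAt.clog hh.div_const ?_)
    rw [hh0, div_self hj0]
    exact Complex.one_mem_slitPlane
  have hexp : ∀ᶠ t in 𝓝 (0 : ℂ), Complex.exp (l t) = h t := by
    filter_upwards [hh.continuousAt.eventually_ne (by rwa [hh0])] with t ht
    rw [Complex.exp_add, Complex.exp_log hj0, Complex.exp_log (div_ne_zero ht hj0),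
      mul_div_cancel₀ _ hj0]
  refine ⟨ψ, l, ⟨q, hq⟩, hψ0, by rwa [hψ'], hl, ?_, ?_⟩
  · filter_upwards [hexp] with t ht
    rw [ht, ← hth, mul_comm]
  · filter_upwards [hexp.eventually_nhds, hball, hl.eventually_analyticAt] with t ht htb hlt
    have h1 : HasDerivAt (fun t => Complex.exp (l t) * t)
        (Complex.exp (l t) * deriv l t * t + Complex.exp (l t) * 1) t :=
      (hlt.differentiableAt.hasDerivAt.cexp).mul (hasDerivAt_id t)
    have h2 : (fun t => Complex.exp (l t) * t) =ᶠ[𝓝 t] ψ := by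
      filter_upwards [ht] with s hs
      rw [hs, ← hth, mul_comm]
    have h3 := (hψd t htb).unique (h1.congr_of_eventuallyEq h2.symm)
    rw [h3]
    ring

/-- A nonvanishing density `J` is the Jacobian determinant of a germ `η` that respects the fibration
by the product of the coordinates. The induction is on the set `S` of directions in which `J` need
not be invariant. If `S` is empty, `J` is a function of the product and multiplying the coordinate
`o` alone suffices; otherwise `average_step` provides a shear removing one direction from `S`. -/
theorem exists_eta (o : Fin n) (S : Finset (Fin n)) : ∀ J : (Fin n → ℂ) → ℂ,
    AnalyticAt ℂ J 0 → J 0 ≠ 0 →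
    (∀ j, j ∉ S → ∀ᶠ z in 𝓝 (0 : Fin n → ℂ), eul J j z = eul J o z) →
    ∃ (η : (Fin n → ℂ) → Fin n → ℂ) (ψ : ℂ → ℂ), AnalyticAt ℂ η 0 ∧ η 0 = 0 ∧ IsGermAuto ψ ∧
      (∀ᶠ z in 𝓝 (0 : Fin n → ℂ), LinearMap.det ((fderiv ℂ η z).toLinearMap) = J z) ∧
      (∀ᶠ z in 𝓝 (0 : Fin n → ℂ), ∏ i, η z i = ψ (∏ i, z i)) := by
  induction S using Finset.induction_on with
  | empty =>
    intro J hJ hJ0 hinv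
    obtain ⟨j, hj, hJj⟩ := exists_factor_prod o hJ fun k => hinv k (by simp)
    have hj0 : j 0 ≠ 0 := by
      have := hJj.self_of_nhds
      rw [prod_zero_eq o] at this
      rwa [← this]
    obtain ⟨ψ, l, hψ, hψ0, hψ', hl, hl1, hl2⟩ := exists_primitive_log hj hj0
    have hP : Tendsto (fun z : Fin n → ℂ => ∏ i, z i) (𝓝 0) (𝓝 0) := by
      have := (prod_analyticAt (0 : Fin n → ℂ)).continuousAt.tendsto
      rwa [prod_zero_eq o] at this
    have hv : AnalyticAt ℂ (fun z : Fin n → ℂ => l (∏ i, z i)) 0 := by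
      refine AnalyticAt.comp (g := l) (f := fun z : Fin n → ℂ => ∏ i, z i) ?_ (prod_analyticAt 0)
      rwa [prod_zero_eq o]
    refine ⟨shear (Pi.single o 1) fun z => l (∏ i, z i), ψ, shear_analyticAt _ hv,
      shear_zero _ _, ⟨hψ, hψ0, hψ'⟩, ?_, ?_⟩
    · filter_upwards [hv.eventually_analyticAt, hP.eventually hl2, hJj,
        hP.eventually hl.eventually_analyticAt] with z h1 h2 h3 h4
      rw [shear_det _ h1.differentiableAt, h3, ← h2]
      simp only [Pi.single_apply, Finset.sum_ite_eq', Finset.mem_univ, if_true, mul_one, ite_mul,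
        one_mul, zero_mul]
      rw [eul_comp h4.differentiableAt (prod_analyticAt z).differentiableAt, eul_prod]
    · filter_upwards [hP.eventually hl1] with z h1
      rw [prod_shear, ← h1]
      simp
  | insert k S hk ih =>
    intro J hJ hJ0 hinv
    obtain ⟨A, v, hA, hv, hA0, hAk, hAj, hAJ⟩ := average_step (o := o) (k := k) hJ hJ0
    obtain ⟨η, ψ, hη, hη0, hψ, hdet, hprod⟩ := ih A hA hA0 fun j hj => by
      by_cases hjk : j = k
      · exact hjk ▸ hAk
      · exact hAj j (hinv j (by simp [hjk, hj]))
    set ε : Fin n → ℂ := Pi.single k 1 - Pi.single o 1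
    have hε : ∑ i, ε i = 0 := by simp [ε]
    have hs : AnalyticAt ℂ (shear ε v) 0 := shear_analyticAt _ hv
    have hst : Tendsto (shear ε v) (𝓝 0) (𝓝 0) := by
      have := hs.continuousAt.tendsto
      rwa [shear_zero] at this
    refine ⟨fun z => η (shear ε v z), ψ, ?_, by simp only [shear_zero, hη0], hψ, ?_, ?_⟩
    · exact AnalyticAt.comp (g := η) (by rwa [shear_zero]) hs
    · filter_upwards [hst.eventually hη.eventually_analyticAt, hst.eventually hdet,
        hv.eventually_analyticAt, comp_shear_eq o k hA hv hAk, hAJ] with z h1 h2 h3 h4 h5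
      have hc : fderiv ℂ (fun z => η (shear ε v z)) z =
          (fderiv ℂ η (shear ε v z)).comp (fderiv ℂ (shear ε v) z) :=
        fderiv_comp z h1.differentiableAt (shear_analyticAt ε h3).differentiableAt
      rw [hc, ContinuousLinearMap.toLinearMap_comp, LinearMap.det_comp, h2,
        shear_det _ h3.differentiableAt, h4, hε, ← h5]
      simp [ε, Pi.single_apply, sub_mul, Finset.sum_sub_distrib]
    · filter_upwards [hst.eventually hprod] with z h1
      rw [h1, prod_shear, hε]
      simp

/-! ### Existence -/

theorem exists_inverse {η : (Fin n → ℂ) → (Fin n → ℂ)} (hη : AnalyticAt ℂ η 0) (h0 : η 0 = 0)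
    (hdet : LinearMap.det (fderiv ℂ η 0).toLinearMap ≠ 0) : ∃ χ, IsGermBiholo η χ := by
  set e : (Fin n → ℂ) ≃L[ℂ] (Fin n → ℂ) :=
    ContinuousLinearMap.toContinuousLinearEquivOfDetNeZero (fderiv ℂ η 0) hdet with he
  have hs : HasStrictFDerivAt η (e : (Fin n → ℂ) →L[ℂ] (Fin n → ℂ)) 0 := by
    rw [he, ContinuousLinearMap.coe_toContinuousLinearEquivOfDetNeZero]
    exact hη.hasStrictFDerivAt
  have hc : ContDiffAt ℂ ⊤ η 0 := hη.contDiffAt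
  refine ⟨hs.localInverse η e 0, hη, ?_, h0, ?_, hs.eventually_left_inverse, ?_⟩
  · have := hc.to_localInverse (f' := e) hs.hasFDerivAt (by simp)
    rw [h0] at this
    exact this.analyticAt
  · have := hs.localInverse_apply_image
    rwa [h0] at this
  · have := hs.eventually_right_inverse
    rwa [h0] at this

theorem exists_inverse_auto {ψ : ℂ → ℂ} (hψ : IsGermAuto ψ) :
    ∃ Ψ, IsGermAuto Ψ ∧ (∀ᶠ t in 𝓝 (0 : ℂ), Ψ (ψ t) = t) ∧ ∀ᶠ t in 𝓝 (0 : ℂ), ψ (Ψ t) = t := by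
  obtain ⟨ha, h0, hd⟩ := hψ
  have hs : HasStrictDerivAt ψ (deriv ψ 0) 0 := ha.hasStrictDerivAt
  have h1 := ha.analyticAt_localInverse hd
  have h2 := hs.to_localInverse hd
  have h3 := HasStrictFDerivAt.localInverse_apply_image
    (hs.hasStrictFDerivAt_equiv hd)
  have h4 := HasStrictFDerivAt.eventually_left_inverse
    (hs.hasStrictFDerivAt_equiv hd)
  have h5 := HasStrictFDerivAt.eventually_right_inverse
    (hs.hasStrictFDerivAt_equiv hd)
  rw [h0] at h1 h2 h3 h5
  refine ⟨_, ⟨h1, h3, ?_⟩, h4, h5⟩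
  rw [h2.hasDerivAt.deriv]
  exact inv_ne_zero hd

theorem IsGermBiholo.symm {φ ι : (Fin n → ℂ) → (Fin n → ℂ)} (h : IsGermBiholo φ ι) :
    IsGermBiholo ι φ :=
  ⟨h.2.1, h.1, h.2.2.2.1, h.2.2.1, h.2.2.2.2.2, h.2.2.2.2.1⟩

/-- A map fixing the origin and analytic there pulls neighbourhoods of `0` back to such. -/
theorem eventually_comp {E F : Type*} [NormedAddCommGroup E] [NormedSpace ℂ E]
    [NormedAddCommGroup F] [NormedSpace ℂ F] {φ : E → F} (h : AnalyticAt ℂ φ 0) (h0 : φ 0 = 0)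
    {p : F → Prop} (hp : ∀ᶠ z in 𝓝 (0 : F), p z) : ∀ᶠ z in 𝓝 (0 : E), p (φ z) := by
  have := h.continuousAt.tendsto
  rw [h0] at this
  exact this.eventually hp

theorem analyticAt_comp_zero {E F G : Type*} [NormedAddCommGroup E] [NormedSpace ℂ E]
    [NormedAddCommGroup F] [NormedSpace ℂ F] [NormedAddCommGroup G] [NormedSpace ℂ G]
    {g : F → G} {φ : E → F} (hg : AnalyticAt ℂ g 0) (h : AnalyticAt ℂ φ 0) (h0 : φ 0 = 0) :
    AnalyticAt ℂ (fun z => g (φ z)) 0 := by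
  rw [← h0] at hg
  exact hg.comp h

theorem IsGermBiholo.comp {φ ι φ' ι' : (Fin n → ℂ) → (Fin n → ℂ)} (h : IsGermBiholo φ ι)
    (h' : IsGermBiholo φ' ι') : IsGermBiholo (fun z => φ (φ' z)) (fun z => ι' (ι z)) := by
  obtain ⟨a, b, c, d, e, g⟩ := h
  obtain ⟨a', b', c', d', e', g'⟩ := h'
  refine ⟨analyticAt_comp_zero a a' c', analyticAt_comp_zero b' b d, by simp [c, c'],
    by simp [d, d'], ?_, ?_⟩
  · filter_upwards [e', eventually_comp a' c' e] with z h1 h2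
    rw [h2, h1]
  · filter_upwards [g, eventually_comp b d g'] with z h1 h2
    rw [h2, h1]

theorem det_fderiv_comp {φ φ' : (Fin n → ℂ) → (Fin n → ℂ)} {z : Fin n → ℂ}
    (h : DifferentiableAt ℂ φ (φ' z)) (h' : DifferentiableAt ℂ φ' z) :
    LinearMap.det (fderiv ℂ (fun z => φ (φ' z)) z).toLinearMap =
      LinearMap.det (fderiv ℂ φ (φ' z)).toLinearMap *
        LinearMap.det (fderiv ℂ φ' z).toLinearMap := by
  have := fderiv_comp z h h'
  rw [show (fun z => φ (φ' z)) = φ ∘ φ' from rfl, this]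
  exact LinearMap.det_comp _ _

theorem IsGermBiholo.det_mul_det {φ ι : (Fin n → ℂ) → (Fin n → ℂ)} (h : IsGermBiholo φ ι) :
    ∀ᶠ z in 𝓝 (0 : Fin n → ℂ), LinearMap.det (fderiv ℂ φ (ι z)).toLinearMap *
        LinearMap.det (fderiv ℂ ι z).toLinearMap = 1 := by
  obtain ⟨a, b, c, d, e, g⟩ := h
  filter_upwards [eventually_comp b d a.eventually_analyticAt, b.eventually_analyticAt,
    g.eventually_nhds] with z h1 h2 h3
  rw [← det_fderiv_comp h1.differentiableAt h2.differentiableAt,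
    (show (fun z => φ (ι z)) =ᶠ[𝓝 z] id from h3).fderiv_eq, fderiv_id]
  simp

theorem det_eq_matrix (L : (Fin n → ℂ) →L[ℂ] (Fin n → ℂ)) :
    LinearMap.det L.toLinearMap = Matrix.det (Matrix.of fun i j => L (Pi.single j 1) i) := by
  rw [← LinearMap.det_toMatrix']
  congr 1

theorem det_analyticAt {φ : (Fin n → ℂ) → (Fin n → ℂ)} (h : AnalyticAt ℂ φ 0) :
    AnalyticAt ℂ (fun z => LinearMap.det (fderiv ℂ φ z).toLinearMap) 0 := by
  simp only [det_eq_matrix, Matrix.det_apply', Matrix.of_apply]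
  refine Finset.analyticAt_fun_sum _ fun τ _ => ?_
  refine analyticAt_const.mul (Finset.analyticAt_fun_prod _ fun i _ => ?_)
  have h1 : AnalyticAt ℂ (fun z => fderiv ℂ φ z (Pi.single i 1)) 0 :=
    (ContinuousLinearMap.apply ℂ (Fin n → ℂ) (Pi.single i (1 : ℂ) : Fin n → ℂ)).analyticAt _
      |>.comp h.fderiv
  exact (ContinuousLinearMap.proj (R := ℂ) (φ := fun _ : Fin n => ℂ) (τ i)).analyticAt _ |>.comp h1

/-- With `η` and `ψ` from `exists_eta` for the Jacobian determinant of `σι`, the maps are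
`Φ = σι ∘ η⁻¹` and `Ψ = ψ⁻¹`. -/
theorem exists_normal_form (hn : 2 ≤ n) {f : (Fin n → ℂ) → ℂ}
    {σ σι : (Fin n → ℂ) → (Fin n → ℂ)} (hσ : IsGermBiholo σ σι)
    (hf : ∀ᶠ z in 𝓝 (0 : Fin n → ℂ), f (σι z) = ∏ i, z i) :
    ∃ Φ Φι : (Fin n → ℂ) → (Fin n → ℂ), IsGermBiholo Φ Φι ∧ IsVolumePreserving Φ ∧
    ∃ Ψ : ℂ → ℂ, IsGermAuto Ψ ∧ (∀ᶠ z in 𝓝 (0 : Fin n → ℂ), f (Φ z) = Ψ (∏ i, z i)) := by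
  have o : Fin n := ⟨0, by omega⟩
  have hJ : LinearMap.det (fderiv ℂ σι 0).toLinearMap ≠ 0 := by
    have := hσ.det_mul_det.self_of_nhds
    exact right_ne_zero_of_mul (this.trans_ne one_ne_zero)
  obtain ⟨η, ψ, hη, hη0, hψ, hd, hp⟩ := exists_eta o Finset.univ
    (fun z => LinearMap.det (fderiv ℂ σι z).toLinearMap) (det_analyticAt hσ.2.1) hJ (by simp)
  obtain ⟨χ, hχ⟩ := exists_inverse hη hη0 (by rw [hd.self_of_nhds]; exact hJ)
  obtain ⟨Ψ, hΨ, hl, hr⟩ := exists_inverse_auto hψ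
  have hχa := hχ.2.1
  have hχ0 := hχ.2.2.2.1
  refine ⟨_, _, hσ.symm.comp hχ.symm, ?_, Ψ, hΨ, ?_⟩
  · filter_upwards [hχ.det_mul_det, eventually_comp hχa hχ0 hσ.2.1.eventually_analyticAt,
      hχa.eventually_analyticAt, eventually_comp hχa hχ0 hd] with z h1 h2 h3 h4
    rw [det_fderiv_comp h2.differentiableAt h3.differentiableAt, ← h4, h1]
  · have hpa := prod_analyticAt (n := n) 0
    filter_upwards [eventually_comp hχa hχ0 hf, eventually_comp hχa hχ0 hp, hχ.2.2.2.2.2,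
      eventually_comp (analyticAt_comp_zero hpa hχa hχ0) (by simp only [hχ0]; exact prod_zero_eq o) hl]
      with z h1 h2 h3 h4
    rw [h1, ← h4, ← h2, h3]

/-! ### Germs preserving the coordinate hyperplanes -/

/-- Analytic functions on a ball have no zero divisors. -/
theorem exists_eq_zero_of_prod_eq_zero {ι : Type*} (s : Finset ι) {r : ℝ}
    {G : ι → (Fin n → ℂ) → ℂ}
    (hG : ∀ i, AnalyticOnNhd ℂ (G i) (Metric.ball 0 r)) :
    (∀ z ∈ Metric.ball (0 : Fin n → ℂ) r, ∏ i ∈ s, G i z = 0) → 0 < r →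
    ∃ i ∈ s, ∀ z ∈ Metric.ball (0 : Fin n → ℂ) r, G i z = 0 := by
  classical
  induction s using Finset.induction_on with
  | empty =>
    intro h hr
    simpa using h 0 (Metric.mem_ball_self hr)
  | insert a s has ih =>
    intro h hr
    by_cases ha : ∀ z ∈ Metric.ball (0 : Fin n → ℂ) r, G a z = 0
    · exact ⟨a, Finset.mem_insert_self a s, ha⟩
    push Not at ha
    obtain ⟨z₀, hz₀, hne⟩ := ha
    have hs : AnalyticOnNhd ℂ (fun z => ∏ i ∈ s, G i z) (Metric.ball 0 r) :=
      fun z hz => Finset.analyticAt_fun_prod s fun i _ => hG i z hz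
    have h0 : (fun z => ∏ i ∈ s, G i z) =ᶠ[𝓝 z₀] 0 := by
      filter_upwards [(hG a z₀ hz₀).continuousAt.eventually_ne hne,
        Metric.isOpen_ball.mem_nhds hz₀] with z h1 h2
      have := h z h2
      rw [Finset.prod_insert has] at this
      exact (mul_eq_zero.1 this).resolve_left h1
    obtain ⟨i, hi, hzero⟩ := ih (hs.eqOn_zero_of_preconnected_of_eventuallyEq_zero
      (convex_ball _ _).isPreconnected hz₀ h0) hr
    exact ⟨i, Finset.mem_insert_of_mem hi, hzero⟩

/-- `ramp j θ` scales the `j`-th coordinate by a factor running smoothly from `0` to `1`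
over `[0, 2π]`, staying in `[0, 1]` for all `θ`, and fixes the other coordinates. -/
noncomputable def ramp (j : Fin n) (θ : ℝ) : Fin n → ℂ :=
  Function.update 1 j (((1 - Real.cos (θ / 2)) / 2 : ℝ) : ℂ)

theorem ramp_norm (j : Fin n) (θ : ℝ) : ‖ramp j θ‖ ≤ 1 := by
  refine (pi_norm_le_iff_of_nonneg zero_le_one).2 fun i => ?_
  by_cases hi : i = j
  · subst hi
    simp only [ramp, Function.update_self, Complex.norm_real, Real.norm_eq_abs]
    have h1 := Real.cos_le_one (θ / 2)
    have h2 := Real.neg_one_le_cos (θ / 2)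
    rw [abs_le]; constructor <;> linarith
  · simp [ramp, Function.update_of_ne hi]

theorem ramp_continuous (j : Fin n) : Continuous (ramp (n := n) j) := by
  unfold ramp
  refine continuous_pi fun i => ?_
  by_cases hi : i = j
  · subst hi; simp only [Function.update_self]; fun_prop
  · simp only [Function.update_of_ne hi]; exact continuous_const

/-- An analytic germ vanishing on `z_j = 0` is divisible by `z_j`. The quotient is Hadamard's integral
of `∂g/∂z_j` along the segment from `z_j = 0`, parametrized by `ramp`. -/
theorem exists_div_coord (j : Fin n) {g : (Fin n → ℂ) → ℂ} (hg : AnalyticAt ℂ g 0)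
    (h0 : ∀ᶠ z in 𝓝 (0 : Fin n → ℂ), g (Function.update z j 0) = 0) :
    ∃ u : (Fin n → ℂ) → ℂ, AnalyticAt ℂ u 0 ∧ ∀ᶠ z in 𝓝 (0 : Fin n → ℂ), g z = z j * u z := by
  -- The derivative of the `j`-th entry of `ramp j`.
  set w : ℝ → ℂ := fun θ => ((Real.sin (θ / 2) / 4 : ℝ) : ℂ)
  have hwc : Continuous w := by fun_prop
  have hda : AnalyticAt ℂ (fun z => fderiv ℂ g z (Pi.single j 1)) 0 :=
    (ContinuousLinearMap.apply ℂ ℂ (Pi.single j (1 : ℂ) : Fin n → ℂ)).analyticAt _ |>.comp hg.fderiv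
  refine ⟨torusInt w (ramp j) (fun z => fderiv ℂ g z (Pi.single j 1)),
    torusInt_analyticAt hwc (ramp_continuous j) (ramp_norm j) hda, ?_⟩
  obtain ⟨r, hr, hgr⟩ := exists_ball_analytic hg
  obtain ⟨r', hr', hgr'⟩ := exists_ball_analytic hda
  filter_upwards [h0, eventually_of_ball hr (P := fun z => ‖z‖ < r) fun z hz => hz,
    eventually_of_ball hr' (P := fun z => ‖z‖ < r') fun z hz => hz] with z hz hzr hzr'
  have hder : ∀ θ : ℝ, HasDerivAt (fun θ => g (ramp j θ * z))
      (z j * (w θ * fderiv ℂ g (ramp j θ * z) (Pi.single j 1))) θ := by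
    intro θ
    have h1 : HasDerivAt (fun θ : ℝ => ramp j θ * z) (Pi.single j (w θ * z j)) θ := by
      rw [hasDerivAt_pi]
      intro i
      by_cases hi : i = j
      · subst hi
        simp only [ramp, Pi.mul_apply, Function.update_self, Pi.single_eq_same]
        have h2 : HasDerivAt (fun θ : ℝ => (1 - Real.cos (θ / 2)) / 2) (Real.sin (θ / 2) / 4) θ := by
          have := ((((hasDerivAt_id θ).div_const 2).cos).const_sub 1).div_const 2
          refine this.congr_deriv ?_
          simp; ring
        exact (h2.ofReal_comp).mul_const _
      · simp only [ramp, Pi.mul_apply, Function.update_of_ne hi, Pi.single_eq_of_ne hi]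
        exact hasDerivAt_const _ _
    have h3 := ((hgr _ (norm_mul_lt_of_norm_le_one (ramp_norm j θ) hzr)).differentiableAt
      |>.hasFDerivAt.restrictScalars ℝ).comp_hasDerivAt θ h1
    refine h3.congr_deriv ?_
    have : (Pi.single j (w θ * z j) : Fin n → ℂ) = (w θ * z j) • Pi.single j (1 : ℂ) := by
      rw [← Pi.single_smul']; simp
    rw [this]
    simp
    ring
  have hcont : Continuous fun θ : ℝ => fderiv ℂ g (ramp j θ * z) (Pi.single j 1) := by
    rw [continuous_iff_continuousAt]
    intro θ
    exact ContinuousAt.comp (f := fun θ => ramp j θ * z)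
      (hgr' _ (norm_mul_lt_of_norm_le_one (ramp_norm j θ) hzr')).continuousAt
      ((ramp_continuous j).mul continuous_const).continuousAt
  have hint := intervalIntegral.integral_eq_sub_of_hasDerivAt (a := 0) (b := 2 * Real.pi)
    (fun θ _ => hder θ)
    ((continuous_const.mul (hwc.mul hcont)).intervalIntegrable _ _)
  have e1 : ramp j (2 * Real.pi) * z = z := by
    have : ramp j (2 * Real.pi) = (1 : Fin n → ℂ) := by
      ext i
      by_cases hi : i = j
      · subst hi
        simp [ramp]
      · simp [ramp, Function.update_of_ne hi]
    rw [this, one_mul]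
  have e2 : ramp j 0 * z = Function.update z j 0 := by
    ext i
    by_cases hi : i = j
    · subst hi
      simp [ramp]
    · simp [ramp, Function.update_of_ne hi]
  rw [e1, e2, hz, sub_zero, intervalIntegral.integral_const_mul] at hint
  rw [← hint, torusInt]

theorem exists_log {u : (Fin n → ℂ) → ℂ} (hu : AnalyticAt ℂ u 0) (h0 : u 0 ≠ 0) :
    ∃ v : (Fin n → ℂ) → ℂ, AnalyticAt ℂ v 0 ∧ ∀ᶠ z in 𝓝 (0 : Fin n → ℂ), Complex.exp (v z) = u z := by
  refine ⟨fun z => Complex.log (u z / u 0) + Complex.log (u 0), ?_, ?_⟩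
  · refine AnalyticAt.add (AnalyticAt.clog (hu.div analyticAt_const h0) ?_) analyticAt_const
    rw [div_self h0]; exact Complex.one_mem_slitPlane
  · filter_upwards [hu.continuousAt.eventually_ne h0] with z hz
    rw [Complex.exp_add, Complex.exp_log (div_ne_zero hz h0), Complex.exp_log h0,
      div_mul_cancel₀ _ h0]

/-- On the hyperplane `z_j = 0` the product of the `χ_i` vanishes, so one of the factors does, say
`χ_(τ j)`, which is then divisible by `z_j`. Invertibility of the derivative of `χ` at `0` makes the
quotients units and `τ` a permutation. -/
theorem exists_perm_exp {χ χι : (Fin n → ℂ) → (Fin n → ℂ)} (hχ : IsGermBiholo χ χι)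
    {ψ : ℂ → ℂ} (hψ0 : ψ 0 = 0)
    (hp : ∀ᶠ z in 𝓝 (0 : Fin n → ℂ), ∏ i, χ z i = ψ (∏ i, z i)) :
    ∃ (τ : Equiv.Perm (Fin n)) (v : Fin n → (Fin n → ℂ) → ℂ), (∀ j, AnalyticAt ℂ (v j) 0) ∧
      ∀ᶠ z in 𝓝 (0 : Fin n → ℂ), ∀ j, χ z (τ j) = Complex.exp (v j z) * z j := by
  have hχi : ∀ i, AnalyticAt ℂ (fun z => χ z i) 0 := fun i => analyticAt_pi_iff.1 hχ.1 i
  have key : ∀ j, ∃ i, ∃ u : (Fin n → ℂ) → ℂ, AnalyticAt ℂ u 0 ∧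
      ∀ᶠ z in 𝓝 (0 : Fin n → ℂ), χ z i = z j * u z := by
    intro j
    obtain ⟨r, hr, hr'⟩ := eventually_exists_ball
      ((eventually_all.2 fun i => (hχi i).eventually_analyticAt).and hp)
    have hup : ∀ z : Fin n → ℂ, z ∈ Metric.ball (0 : Fin n → ℂ) r → ‖Function.update z j 0‖ < r := by
      intro z hz
      rw [mem_ball_zero_iff] at hz
      refine lt_of_le_of_lt ((pi_norm_le_iff_of_nonneg (norm_nonneg z)).2 fun i => ?_) hz
      by_cases hi : i = j
      · subst hi; simp
      · simpa [Function.update_of_ne hi] using norm_le_pi_norm z i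
    have hua : ∀ z, AnalyticAt ℂ (fun z : Fin n → ℂ => Function.update z j 0) z := by
      intro z
      refine analyticAt_pi_iff.2 fun i => ?_
      by_cases hi : i = j
      · subst hi; simp only [Function.update_self]; exact analyticAt_const
      · simp only [Function.update_of_ne hi]
        exact (ContinuousLinearMap.proj (R := ℂ) (φ := fun _ : Fin n => ℂ) i).analyticAt z
    obtain ⟨i, -, hi⟩ := exists_eq_zero_of_prod_eq_zero (Finset.univ : Finset (Fin n)) (r := r)
      (G := fun i z => χ (Function.update z j 0) i)
      (fun i z hz => AnalyticAt.comp (f := fun z : Fin n → ℂ => Function.update z j 0)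
        ((hr' _ (hup z hz)).1 i) (hua z))
      (fun z hz => by
        rw [(hr' _ (hup z hz)).2, Finset.prod_eq_zero (Finset.mem_univ j) (by simp), hψ0]) hr
    exact ⟨i, exists_div_coord j (hχi i)
      (eventually_of_ball hr fun z hz => hi z (by simpa using hz))⟩
  choose τ u hu hχu using key
  have hd : ∀ j w, fderiv ℂ χ 0 w (τ j) = w j * u j 0 := by
    intro j w
    have h1 : HasFDerivAt (fun z => χ z (τ j))
        (ContinuousLinearMap.proj (R := ℂ) (φ := fun _ : Fin n => ℂ) (τ j) ∘SL fderiv ℂ χ 0) 0 :=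
      hasFDerivAt_pi'.1 hχ.1.differentiableAt.hasFDerivAt (τ j)
    have h2 : HasFDerivAt (fun z : Fin n → ℂ => z j * u j z) _ 0 :=
      (ContinuousLinearMap.proj (R := ℂ) (φ := fun _ : Fin n => ℂ) j).hasFDerivAt.mul
        (hu j).differentiableAt.hasFDerivAt
    have h3 := h1.unique (h2.congr_of_eventuallyEq (hχu j))
    have := DFunLike.congr_fun h3 w
    simpa [mul_comm] using this
  have hdet : LinearMap.det (fderiv ℂ χ 0).toLinearMap ≠ 0 := by
    have := hχ.det_mul_det.self_of_nhds
    rw [hχ.2.2.2.1] at this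
    exact left_ne_zero_of_mul (this.trans_ne one_ne_zero)
  have hu0 : ∀ j, u j 0 ≠ 0 := by
    intro j hj
    apply hdet
    rw [det_eq_matrix]
    exact Matrix.det_eq_zero_of_row_eq_zero (τ j) fun k => by simp [hd, hj]
  have hinj : Function.Injective τ := by
    intro j j' hjj
    by_contra hne
    have h1 := hd j (Pi.single j 1)
    have h2 := hd j' (Pi.single j 1)
    rw [← hjj, h1] at h2
    simp [Ne.symm hne, hu0] at h2
  have hv : ∀ j, ∃ v : (Fin n → ℂ) → ℂ, AnalyticAt ℂ v 0 ∧
      ∀ᶠ z in 𝓝 (0 : Fin n → ℂ), Complex.exp (v z) = u j z := fun j => exists_log (hu j) (hu0 j)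
  choose v hva hve using hv
  refine ⟨Equiv.ofBijective τ (Finite.injective_iff_bijective.1 hinj), v, hva, ?_⟩
  filter_upwards [eventually_all.2 hve, eventually_all.2 hχu] with z h1 h2 j
  rw [h1, Equiv.ofBijective_apply, h2, mul_comm]

/-! ### Torus-exact functions -/

/-- The chain rule for Euler derivatives of a function composed with a shear. -/
theorem eul_comp_shear (ε : Fin n → ℂ) {u v : (Fin n → ℂ) → ℂ} {z : Fin n → ℂ}
    (hu : DifferentiableAt ℂ u z) (hv : DifferentiableAt ℂ v (shear ε u z)) (l : Fin n) :
    eul (fun z => v (shear ε u z)) l z =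
      eul v l (shear ε u z) + eul u l z * ∑ i, ε i * eul v i (shear ε u z) := by
  have h : ∀ i, HasFDerivAt (fun z => shear ε u z i)
      (Complex.exp (u z * ε i) • ContinuousLinearMap.proj (R := ℂ) (φ := fun _ : Fin n => ℂ) i +
        z i • Complex.exp (u z * ε i) • ε i • fderiv ℂ u z) z := fun i =>
    ((hu.hasFDerivAt.mul_const (ε i)).cexp).mul
      (ContinuousLinearMap.proj (R := ℂ) (φ := fun _ : Fin n => ℂ) i).hasFDerivAt
  have h2 := (hv.hasFDerivAt.comp z (hasFDerivAt_pi.2 h)).fderiv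
  rw [eul, show (fun z => v (shear ε u z)) = v ∘ fun z => shear ε u z from rfl, h2,
    ContinuousLinearMap.comp_apply, fderiv_eq_sum]
  have e : eul v l (shear ε u z) = ∑ i, (Pi.single l 1 : Fin n → ℂ) i * eul v i (shear ε u z) := by
    simp [Pi.single_apply]
  rw [e, Finset.mul_sum, Finset.mul_sum, ← Finset.sum_add_distrib]
  refine Finset.sum_congr rfl fun i _ => ?_
  by_cases hi : i = l
  · subst hi
    simp [eul, shear]
    ring
  · simp [eul, shear, hi]
    ring

/-- Near `0`, `J` is a sum over `k ∈ S` of derivatives `(E_k - E_o) K_k` of analytic germs along the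
generators of the torus action that preserves the product of the coordinates. -/
def IsTorusExact (o : Fin n) (S : Finset (Fin n)) (J : (Fin n → ℂ) → ℂ) : Prop :=
  ∃ K : Fin n → (Fin n → ℂ) → ℂ, (∀ k, AnalyticAt ℂ (K k) 0) ∧
    ∀ᶠ z in 𝓝 (0 : Fin n → ℂ), J z = ∑ k ∈ S, (eul (K k) k z - eul (K k) o z)

theorem eul_add {A B : (Fin n → ℂ) → ℂ} {z : Fin n → ℂ} (hA : DifferentiableAt ℂ A z)
    (hB : DifferentiableAt ℂ B z) (i : Fin n) :
    eul (fun z => A z + B z) i z = eul A i z + eul B i z := by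
  have h := (hA.hasFDerivAt.add hB.hasFDerivAt).fderiv
  unfold eul
  rw [show (fun z => A z + B z) = A + B from rfl, h]
  simp
  ring

theorem eul_neg {A : (Fin n → ℂ) → ℂ} {z : Fin n → ℂ} (i : Fin n) :
    eul (fun z => -A z) i z = -eul A i z := by
  unfold eul
  rw [show (fun z => -A z) = -A from rfl, fderiv_neg]
  simp

theorem IsTorusExact.add {o : Fin n} {S : Finset (Fin n)} {J J' : (Fin n → ℂ) → ℂ}
    (h : IsTorusExact o S J) (h' : IsTorusExact o S J') :
    IsTorusExact o S (fun z => J z + J' z) := by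
  obtain ⟨K, hK, hJ⟩ := h
  obtain ⟨K', hK', hJ'⟩ := h'
  refine ⟨fun k z => K k z + K' k z, fun k => (hK k).add (hK' k), ?_⟩
  filter_upwards [hJ, hJ', eventually_all.2 fun k => (hK k).eventually_analyticAt,
    eventually_all.2 fun k => (hK' k).eventually_analyticAt] with z h1 h2 h3 h4
  rw [h1, h2, ← Finset.sum_add_distrib]
  refine Finset.sum_congr rfl fun k _ => ?_
  rw [eul_add (h3 k).differentiableAt (h4 k).differentiableAt,
    eul_add (h3 k).differentiableAt (h4 k).differentiableAt]
  ring

theorem IsTorusExact.congr {o : Fin n} {S : Finset (Fin n)} {J J' : (Fin n → ℂ) → ℂ}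
    (h : IsTorusExact o S J) (h' : ∀ᶠ z in 𝓝 (0 : Fin n → ℂ), J' z = J z) :
    IsTorusExact o S J' := by
  obtain ⟨K, hK, hJ⟩ := h
  refine ⟨K, hK, ?_⟩
  filter_upwards [hJ, h'] with z h1 h2
  rw [h2, h1]

theorem isTorusExact_single (o k : Fin n) {A : (Fin n → ℂ) → ℂ} (hA : AnalyticAt ℂ A 0) :
    IsTorusExact o Finset.univ (fun z => eul A k z - eul A o z) := by
  refine ⟨fun i => if i = k then A else fun _ => 0, fun i => ?_, ?_⟩
  · dsimp only
    split_ifs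
    · exact hA
    · exact analyticAt_const
  · refine Eventually.of_forall fun z => ?_
    rw [Finset.sum_eq_single k]
    · simp
    · intro i _ hi
      simp [hi, eul]
    · simp

/-- Pulling back the density `J` by a shear `T` along `E_k - E_o` changes it by a torus-exact term.
Writing `J = A (1 + (E_k - E_o) v)` as in `average_step`, the change is the derivative along
`E_k - E_o` of `A * (u + v ∘ T - v)`. -/
theorem isTorusExact_shear {o k : Fin n} {J u : (Fin n → ℂ) → ℂ} (hJ : AnalyticAt ℂ J 0)
    (hJ0 : J 0 ≠ 0) (hu : AnalyticAt ℂ u 0) :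
    IsTorusExact o Finset.univ (fun z => J (shear (Pi.single k 1 - Pi.single o 1) u z) *
      LinearMap.det (fderiv ℂ (shear (Pi.single k 1 - Pi.single o 1) u) z).toLinearMap - J z) := by
  set ε : Fin n → ℂ := Pi.single k 1 - Pi.single o 1 with hε
  have hεsum : ∀ x : Fin n → ℂ, ∑ i, ε i * x i = x k - x o := by
    intro x
    simp [hε, sub_mul, Finset.sum_sub_distrib, Pi.single_apply]
  have hε0 : ∑ i, ε i = 0 := by
    have := hεsum 1
    simpa using this
  obtain ⟨A, v, hA, hv, -, hinv, -, hAJ⟩ := average_step (o := o) (k := k) hJ hJ0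
  have hT := shear_analyticAt ε hu
  have hT0 := shear_zero ε u
  have hvT := analyticAt_comp_zero hv hT hT0
  have hB : AnalyticAt ℂ (fun z => u z + (v (shear ε u z) + -v z)) 0 := hu.add (hvT.add hv.neg)
  refine (isTorusExact_single o k (hA.mul hB)).congr ?_
  filter_upwards [comp_shear_eq o k hA hu hinv, hinv, hAJ, eventually_comp hT hT0 hAJ,
    hA.eventually_analyticAt, hB.eventually_analyticAt, hu.eventually_analyticAt,
    hv.eventually_analyticAt, eventually_comp hT hT0 hv.eventually_analyticAt,
    hvT.eventually_analyticAt]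
    with z h1 h2 h3 h4 h5 h6 h7 h8 h9 h10
  have hd := h5.differentiableAt
  have hdB := h6.differentiableAt
  have e : ∀ l, eul (fun z => u z + (v (shear ε u z) + -v z)) l z = eul u l z +
      (eul v l (shear ε u z) + eul u l z * (eul v k (shear ε u z) - eul v o (shear ε u z)) +
        -eul v l z) := by
    intro l
    have hneg : DifferentiableAt ℂ (fun z => -v z) z := h8.differentiableAt.neg
    have hsum : DifferentiableAt ℂ (fun z => v (shear ε u z) + -v z) z :=
      h10.differentiableAt.add hneg
    rw [eul_add h7.differentiableAt hsum,
      eul_add h10.differentiableAt hneg, eul_neg,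
      eul_comp_shear ε h7.differentiableAt h9.differentiableAt,
      hεsum (fun i => eul v i (shear ε u z))]
  rw [show (A * fun z => u z + (v (shear ε u z) + -v z)) =
      fun z => A z * (u z + (v (shear ε u z) + -v z)) from rfl, eul_mul hd hdB, eul_mul hd hdB, e, e,
    shear_det ε h7.differentiableAt, hεsum (fun i => eul u i z), hε0, mul_zero, Complex.exp_zero,
    ← h3, ← h4, h1, h2]
  ring

/-- A torus-exact function of the product of the coordinates vanishes. Averaging over the circle
`rot o l` fixes functions of the product and kills derivatives along that circle, so it removes one
element from `S`. -/
theorem isTorusExact_prod_eq_zero {o : Fin n} (S : Finset (Fin n)) {h : ℂ → ℂ} :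
    IsTorusExact o S (fun z => h (∏ i, z i)) →
    ∀ᶠ z in 𝓝 (0 : Fin n → ℂ), h (∏ i, z i) = 0 := by
  classical
  induction S using Finset.induction_on with
  | empty =>
    rintro ⟨K, hK, hJ⟩
    simpa using hJ
  | insert l S hl ih =>
    rintro ⟨K, hK, hJ⟩
    apply ih
    set w : ℝ → ℂ := fun _ => 1 / (2 * Real.pi) with hw
    have hwc : Continuous w := continuous_const
    have hpi : (Real.pi : ℂ) ≠ 0 := by exact_mod_cast Real.pi_ne_zero
    have hd0 : ∀ θ, HasDerivAt w 0 θ := fun θ => hasDerivAt_const _ _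
    refine ⟨fun k => torusInt w (rot o l) (K k), fun k =>
      torusInt_analyticAt hwc (rot_continuous o l) (rot_norm o l) (hK k), ?_⟩
    have hea : ∀ k i, AnalyticAt ℂ (fun z => eul (K k) i z) 0 := fun k i =>
      ((ContinuousLinearMap.proj (R := ℂ) (φ := fun _ : Fin n => ℂ) i).analyticAt 0).mul
        ((ContinuousLinearMap.apply ℂ ℂ (Pi.single i (1 : ℂ) : Fin n → ℂ)).analyticAt _
          |>.comp (hK k).fderiv)
    obtain ⟨r, hr, hJr⟩ := eventually_exists_ball (hJ.and
      (eventually_all.2 fun k => eventually_all.2 fun i => (hea k i).eventually_analyticAt))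
    filter_upwards [eventually_of_ball hr (P := fun z => ‖z‖ < r) fun z hz => hz,
      eventually_all.2 fun k => eul_torusInt hwc (rot_continuous o l) (rot_norm o l) (hK k),
      torusInt_eul_sub hd0 continuous_const (hK l) o l] with z hz h1 h2
    have hin : ∀ θ, ‖rot o l θ * z‖ < r := fun θ => norm_mul_lt_of_norm_le_one (rot_norm o l θ) hz
    have hrp : ∀ θ, ∏ i, (rot o l θ * z) i = ∏ i, z i := by
      intro θ
      simp only [Pi.mul_apply, Finset.prod_mul_distrib, rot, ← Complex.exp_sum, ← Finset.mul_sum,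
        ← Finset.sum_mul]
      simp
    have hci : ∀ k i, IntervalIntegrable (fun θ => w θ * eul (K k) i (rot o l θ * z))
        MeasureTheory.volume 0 (2 * Real.pi) := by
      intro k i
      refine Continuous.intervalIntegrable (hwc.mul ?_) _ _
      rw [continuous_iff_continuousAt]
      intro θ
      exact ContinuousAt.comp (f := fun θ => rot o l θ * z) ((hJr _ (hin θ)).2 k i).continuousAt
        ((rot_continuous o l).mul continuous_const).continuousAt
    have hmain : h (∏ i, z i) = ∑ k ∈ insert l S,
        (torusInt w (rot o l) (eul (K k) k) z - torusInt w (rot o l) (eul (K k) o) z) := by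
      have e1 : h (∏ i, z i) = ∫ θ in (0 : ℝ)..(2 * Real.pi), w θ * h (∏ i, z i) := by
        simp only [hw, intervalIntegral.integral_const, Complex.real_smul, sub_zero]
        push_cast
        field_simp
      rw [e1]
      simp only [torusInt]
      simp_rw [← intervalIntegral.integral_sub (hci _ _) (hci _ _)]
      rw [← intervalIntegral.integral_finsetSum fun k _ => (hci k k).sub (hci k o)]
      refine intervalIntegral.integral_congr fun θ _ => ?_
      have := (hJr _ (hin θ)).1
      simp only [hrp] at this
      simp only [this, Finset.mul_sum]
      exact Finset.sum_congr rfl fun k _ => by ring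
    rw [hmain, Finset.sum_insert hl, h2]
    simp only [h1]
    simp [torusInt, hw]

/-! ### Uniqueness -/

/-- The map multiplying the `j`-th coordinate by `exp (v j z)`. -/
noncomputable def expMap (v : Fin n → (Fin n → ℂ) → ℂ) (z : Fin n → ℂ) : Fin n → ℂ :=
  fun j => Complex.exp (v j z) * z j

theorem expMap_analyticAt {v : Fin n → (Fin n → ℂ) → ℂ} (hv : ∀ j, AnalyticAt ℂ (v j) 0) :
    AnalyticAt ℂ (expMap v) 0 :=
  analyticAt_pi_iff.2 fun j => (hv j).cexp.mul
    ((ContinuousLinearMap.proj (R := ℂ) (φ := fun _ : Fin n => ℂ) j).analyticAt 0)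

theorem expMap_det_ne_zero {v : Fin n → (Fin n → ℂ) → ℂ} (hv : ∀ j, AnalyticAt ℂ (v j) 0) :
    LinearMap.det (fderiv ℂ (expMap v) 0).toLinearMap ≠ 0 := by
  have h : ∀ j, HasFDerivAt (fun z => expMap v z j)
      (Complex.exp (v j 0) • ContinuousLinearMap.proj (R := ℂ) (φ := fun _ : Fin n => ℂ) j +
        (0 : Fin n → ℂ) j • Complex.exp (v j 0) • fderiv ℂ (v j) 0) 0 := fun j =>
    ((hv j).differentiableAt.hasFDerivAt.cexp).mul
      (ContinuousLinearMap.proj (R := ℂ) (φ := fun _ : Fin n => ℂ) j).hasFDerivAt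
  rw [(hasFDerivAt_pi.2 h).fderiv, det_eq_matrix]
  have : (Matrix.of fun i j => (ContinuousLinearMap.pi fun j =>
      (Complex.exp (v j 0) • ContinuousLinearMap.proj (R := ℂ) (φ := fun _ : Fin n => ℂ) j +
        (0 : Fin n → ℂ) j • Complex.exp (v j 0) • fderiv ℂ (v j) 0))
          (Pi.single j 1 : Fin n → ℂ) i) = Matrix.diagonal fun j => Complex.exp (v j 0) := by
    ext i j
    by_cases hij : i = j
    · subst hij; simp
    · simp [hij]
  rw [this, Matrix.det_diagonal]
  exact Finset.prod_ne_zero_iff.2 fun j _ => Complex.exp_ne_zero _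

theorem isGermBiholo_shear {k o : Fin n} {u : (Fin n → ℂ) → ℂ} (hu : AnalyticAt ℂ u 0) :
    ∃ χ, IsGermBiholo (shear (Pi.single k 1 - Pi.single o 1) u) χ := by
  refine exists_inverse (shear_analyticAt _ hu) (shear_zero _ _) ?_
  rw [shear_det _ hu.differentiableAt]
  simp [eul]

/-- If only the coordinate `o` is multiplied by a nontrivial unit, the Jacobian determinant is a
function of the product of the coordinates. -/
theorem det_single_expMap (o : Fin n) {v : Fin n → (Fin n → ℂ) → ℂ}
    (hv : ∀ j, AnalyticAt ℂ (v j) 0) {ψ : ℂ → ℂ} (hψ : AnalyticAt ℂ ψ 0)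
    (hp : ∀ᶠ z in 𝓝 (0 : Fin n → ℂ), ∏ i, expMap v z i = ψ (∏ i, z i))
    (h0 : ∀ j, j ≠ o → ∀ᶠ z in 𝓝 (0 : Fin n → ℂ), v j z = 0) :
    ∀ᶠ z in 𝓝 (0 : Fin n → ℂ),
      LinearMap.det (fderiv ℂ (expMap v) z).toLinearMap = deriv ψ (∏ i, z i) := by
  have h0' : ∀ᶠ z in 𝓝 (0 : Fin n → ℂ), ∀ j, j ≠ o → v j z = 0 := by
    refine eventually_all.2 fun j => ?_
    by_cases hj : j = o
    · simp [hj]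
    · filter_upwards [h0 j hj] with z hz _ using hz
  have heq : ∀ᶠ z in 𝓝 (0 : Fin n → ℂ), expMap v z = shear (Pi.single o 1) (v o) z := by
    filter_upwards [h0'] with z hz
    ext j
    by_cases hj : j = o
    · subst hj; simp [expMap, shear]
    · simp [expMap, shear, hz j hj, hj]
  have hdet : ∀ᶠ z in 𝓝 (0 : Fin n → ℂ), LinearMap.det (fderiv ℂ (expMap v) z).toLinearMap =
      Complex.exp (v o z) * (1 + eul (v o) o z) := by
    filter_upwards [heq.eventually_nhds, (hv o).eventually_analyticAt] with z h1 h2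
    rw [(show expMap v =ᶠ[𝓝 z] _ from h1).fderiv_eq, shear_det _ h2.differentiableAt]
    simp [Pi.single_apply]
  have hpa := prod_analyticAt (n := n) 0
  have hpz := prod_zero_eq o
  have hdψ : AnalyticAt ℂ (fun z : Fin n → ℂ => deriv ψ (∏ i, z i)) 0 :=
    analyticAt_comp_zero hψ.deriv hpa hpz
  have hX : AnalyticAt ℂ (fun z => LinearMap.det (fderiv ℂ (expMap v) z).toLinearMap -
      deriv ψ (∏ i, z i)) 0 := (det_analyticAt (expMap_analyticAt hv)).sub hdψ
  -- Applying `z_o ∂_o` to `exp (v o z) * ∏ z = ψ (∏ z)` gives the claim multiplied by `∏ z`.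
  have hmul : ∀ᶠ z in 𝓝 (0 : Fin n → ℂ), (LinearMap.det (fderiv ℂ (expMap v) z).toLinearMap -
      deriv ψ (∏ i, z i)) * ∏ i, z i = 0 := by
    have h1 : ∀ᶠ z in 𝓝 (0 : Fin n → ℂ), Complex.exp (v o z) * ∏ i, z i = ψ (∏ i, z i) := by
      filter_upwards [heq, hp] with z h1 h2
      rw [← h2, h1, prod_shear]
      simp
    filter_upwards [h1.eventually_nhds, hdet, (hv o).eventually_analyticAt,
      eventually_comp hpa hpz hψ.eventually_analyticAt] with z h1 h2 h3 h4
    have hP := (prod_analyticAt z).differentiableAt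
    have e1 := eul_congr (show (fun z => Complex.exp (v o z) * ∏ i, z i) =ᶠ[𝓝 z] _ from h1) o
    have e2 : eul (fun z => Complex.exp (v o z)) o z = Complex.exp (v o z) * eul (v o) o z := by
      rw [eul_comp Complex.differentiableAt_exp h3.differentiableAt, Complex.deriv_exp]
    rw [eul_mul h3.differentiableAt.cexp hP, eul_comp h4.differentiableAt hP, eul_prod, e2] at e1
    rw [h2]
    linear_combination e1
  obtain ⟨r, hr, hall⟩ := eventually_exists_ball (hX.eventually_analyticAt.and hmul)
  obtain ⟨i, -, hi⟩ := exists_eq_zero_of_prod_eq_zero (Finset.univ : Finset (Fin 2)) (r := r)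
    (G := ![fun z => LinearMap.det (fderiv ℂ (expMap v) z).toLinearMap - deriv ψ (∏ i, z i),
      fun z => ∏ i, z i])
    (by
      intro i z hz
      fin_cases i
      · exact (hall z (by simpa using hz)).1
      · exact prod_analyticAt z)
    (by
      intro z hz
      simpa [Fin.prod_univ_two] using (hall z (by simpa using hz)).2) hr
  fin_cases i
  · exact eventually_of_ball hr fun z hz => sub_eq_zero.1 (hi z (by simpa using hz))
  · exfalso
    have h1 := hi (fun _ => ((r / 2 : ℝ) : ℂ)) (by
      rw [mem_ball_zero_iff]
      refine lt_of_le_of_lt ((pi_norm_le_iff_of_nonneg (half_pos hr).le).2 fun i => ?_)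
        (half_lt_self hr)
      rw [Complex.norm_real, Real.norm_of_nonneg (half_pos hr).le])
    simp at h1
    exact ne_of_gt hr h1.1

/-- If `expMap v` induces `ψ` on the product of the coordinates, its Jacobian determinant is
`ψ' (∏ i, z i)` up to a torus-exact term. The induction is on a set `S` of coordinates which,
together with `o`, carries all nonzero exponents: factoring out the shear with exponent `v k` transfers the
exponent from `k` to `o`. -/
theorem isTorusExact_det (o : Fin n) {ψ : ℂ → ℂ} (hψ : AnalyticAt ℂ ψ 0) (S : Finset (Fin n)) :
    ∀ v : Fin n → (Fin n → ℂ) → ℂ, (∀ j, AnalyticAt ℂ (v j) 0) →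
    (∀ᶠ z in 𝓝 (0 : Fin n → ℂ), ∏ i, expMap v z i = ψ (∏ i, z i)) →
    (∀ j, j ∉ S → j ≠ o → ∀ᶠ z in 𝓝 (0 : Fin n → ℂ), v j z = 0) →
    IsTorusExact o Finset.univ (fun z =>
      LinearMap.det (fderiv ℂ (expMap v) z).toLinearMap - deriv ψ (∏ i, z i)) := by
  classical
  induction S using Finset.induction_on with
  | empty =>
    intro v hv hp h0
    have h1 := isTorusExact_single o o (A := fun _ : Fin n → ℂ => 0) analyticAt_const
    refine h1.congr ?_
    filter_upwards [det_single_expMap o hv hψ hp fun j hj => h0 j (by simp) hj] with z hz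
    rw [hz, sub_self, sub_self]
  | insert k S hk ih =>
    intro v hv hp h0
    by_cases hko : k = o
    · subst hko
      refine ih v hv hp fun j hj hjo => h0 j (by simp [hj, hjo]) hjo
    set ε : Fin n → ℂ := Pi.single k 1 - Pi.single o 1 with hε
    have hε0 : ∑ i, ε i = 0 := by simp [hε]
    obtain ⟨χ, hχ⟩ := isGermBiholo_shear (k := k) (o := o) (hv k)
    rw [← hε] at hχ
    obtain ⟨hT, hχa, hT0, hχ0, hl, hr⟩ := id hχ
    -- The exponents for which `expMap v'` composed with the shear is `expMap v`; the `k`-th is zero.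
    set v' : Fin n → (Fin n → ℂ) → ℂ := fun j w => v j (χ w) - v k (χ w) * ε j with hv'
    have hv'a : ∀ j, AnalyticAt ℂ (v' j) 0 := fun j =>
      (analyticAt_comp_zero (hv j) hχa hχ0).sub
        ((analyticAt_comp_zero (hv k) hχa hχ0).mul analyticAt_const)
    have hcomp : ∀ᶠ z in 𝓝 (0 : Fin n → ℂ), expMap v' (shear ε (v k) z) = expMap v z := by
      filter_upwards [hl] with z hz
      ext j
      simp only [expMap, hv', hz]
      rw [shear, ← mul_assoc, ← Complex.exp_add, sub_add_cancel]
    have hp' : ∀ᶠ w in 𝓝 (0 : Fin n → ℂ), ∏ i, expMap v' w i = ψ (∏ i, w i) := by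
      filter_upwards [hr, eventually_comp hχa hχ0 hp, eventually_comp hχa hχ0 hcomp]
        with w h1 h2 h3
      rw [h1] at h3
      have h4 := prod_shear ε (v k) (χ w)
      rw [h1, hε0, mul_zero, Complex.exp_zero, one_mul] at h4
      rw [h3, h2, h4]
    have hJ := det_analyticAt (expMap_analyticAt hv'a)
    have hex := ih v' hv'a hp' (by
      intro j hj hjo
      by_cases hjk : j = k
      · subst hjk
        refine Eventually.of_forall fun w => ?_
        simp [hv', hε, hko]
      · filter_upwards [eventually_comp hχa hχ0 (h0 j (by simp [hj, hjk]) hjo)] with w hw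
        simp [hv', hw, hε, hjk, hjo])
    refine (hex.add (isTorusExact_shear (o := o) (k := k) hJ (expMap_det_ne_zero hv'a)
      (hv k))).congr ?_
    filter_upwards [hcomp.eventually_nhds, hT.eventually_analyticAt,
      eventually_comp hT hT0 (expMap_analyticAt hv'a).eventually_analyticAt] with z h1 h2 h3
    rw [← (show (fun z => expMap v' (shear ε (v k) z)) =ᶠ[𝓝 z] expMap v from h1).fderiv_eq,
      det_fderiv_comp h3.differentiableAt h2.differentiableAt]
    ring

/-- The product of the coordinates maps neighbourhoods of `0` onto neighbourhoods of `0`. -/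
theorem eventually_of_prod (o : Fin n) {p : ℂ → Prop}
    (h : ∀ᶠ z in 𝓝 (0 : Fin n → ℂ), p (∏ i, z i)) : ∀ᶠ t in 𝓝 (0 : ℂ), p t := by
  have hn : 0 < n := o.pos
  obtain ⟨r, hr, h⟩ := eventually_exists_ball h
  refine Metric.eventually_nhds_iff.2 ⟨r ^ n, by positivity, fun t ht => ?_⟩
  obtain ⟨s, rfl⟩ := IsAlgClosed.exists_pow_nat_eq t hn
  have hs : ‖s‖ < r := by
    rw [dist_zero_right, norm_pow] at ht
    exact lt_of_pow_lt_pow_left₀ n hr.le ht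
  have := h (fun _ => s) (lt_of_le_of_lt ((pi_norm_le_iff_of_nonneg (norm_nonneg s)).2
    fun _ => le_rfl) hs)
  simpa using this

/-- After undoing the permutation `τ` the Jacobian determinant of `χ` is `sign τ`, so
`sign τ - ψ' (∏ i, z i)` is torus-exact, hence zero, and `ψ t = sign τ * t`. -/
theorem eq_or_eq_neg_of_volumePreserving (o : Fin n) {χ χι : (Fin n → ℂ) → (Fin n → ℂ)}
    (hχ : IsGermBiholo χ χι) (hvol : IsVolumePreserving χ) {ψ : ℂ → ℂ} (hψ : IsGermAuto ψ)
    (hp : ∀ᶠ z in 𝓝 (0 : Fin n → ℂ), ∏ i, χ z i = ψ (∏ i, z i)) :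
    (∀ᶠ t in 𝓝 (0 : ℂ), ψ t = t) ∨ (∀ᶠ t in 𝓝 (0 : ℂ), ψ t = -t) := by
  obtain ⟨τ, v, hv, hχv⟩ := exists_perm_exp hχ hψ.2.1 hp
  set c : ℂ := ((Equiv.Perm.sign τ : ℤ) : ℂ) with hc
  have hpv : ∀ᶠ z in 𝓝 (0 : Fin n → ℂ), ∏ i, expMap v z i = ψ (∏ i, z i) := by
    filter_upwards [hp, hχv] with z h1 h2
    rw [← h1, ← Equiv.prod_comp τ (χ z)]
    exact Finset.prod_congr rfl fun j _ => (h2 j).symm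
  have hdet : ∀ᶠ z in 𝓝 (0 : Fin n → ℂ),
      LinearMap.det (fderiv ℂ (expMap v) z).toLinearMap = c := by
    filter_upwards [hχv.eventually_nhds, hvol, hχ.1.eventually_analyticAt] with z h1 h2 h3
    have h4 : HasFDerivAt (expMap v) (ContinuousLinearMap.pi fun j =>
        ContinuousLinearMap.proj (R := ℂ) (φ := fun _ : Fin n => ℂ) (τ j) ∘SL fderiv ℂ χ z) z := by
      refine hasFDerivAt_pi.2 fun j => ?_
      refine (hasFDerivAt_pi'.1 h3.differentiableAt.hasFDerivAt (τ j)).congr_of_eventuallyEq ?_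
      filter_upwards [h1] with w hw
      exact (hw j).symm
    rw [det_eq_matrix] at h2
    have h5 := Matrix.det_permute τ (Matrix.of fun i j => fderiv ℂ χ z (Pi.single j 1) i)
    rw [h2, mul_one] at h5
    rw [h4.fderiv, det_eq_matrix, hc, ← h5]
    rfl
  have hex := (isTorusExact_det o hψ.1 Finset.univ v hv hpv (by simp)).congr
    (J' := fun z => c - deriv ψ (∏ i, z i)) (by
      filter_upwards [hdet] with z hz
      rw [hz])
  have hder : ∀ᶠ t in 𝓝 (0 : ℂ), c - deriv ψ t = 0 := eventually_of_prod o
    (isTorusExact_prod_eq_zero Finset.univ (h := fun t => c - deriv ψ t) hex)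
  have hlin : ∀ᶠ t in 𝓝 (0 : ℂ), ψ t = c * t := by
    obtain ⟨r, hr, h⟩ := Metric.eventually_nhds_iff.1 (hder.and hψ.1.eventually_analyticAt)
    refine Metric.eventually_nhds_iff.2 ⟨r, hr, fun t ht => ?_⟩
    have hd : ∀ x ∈ Metric.ball (0 : ℂ) r, HasDerivAt (fun t => ψ t - c * t) 0 x := by
      intro x hx
      obtain ⟨h1, h2⟩ := h hx
      refine (h2.differentiableAt.hasDerivAt.sub ((hasDerivAt_id x).const_mul c)).congr_deriv ?_
      rw [← sub_eq_zero.1 h1]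
      simp
    have := (convex_ball (0 : ℂ) r).is_const_of_fderivWithin_eq_zero (𝕜 := ℂ)
      (f := fun t => ψ t - c * t)
      (fun x hx => (hd x hx).differentiableAt.differentiableWithinAt)
      (fun x hx => by
        rw [fderivWithin_of_isOpen Metric.isOpen_ball hx]
        ext
        simp [(hd x hx).deriv])
      (Metric.mem_ball_self hr) (Metric.mem_ball.2 ht)
    simp only [hψ.2.1, mul_zero, sub_zero] at this
    exact sub_eq_zero.1 this.symm
  rcases Int.units_eq_one_or (Equiv.Perm.sign τ) with h | h
  · left
    filter_upwards [hlin] with t ht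
    rw [ht, hc, h]; simp
  · right
    filter_upwards [hlin] with t ht
    rw [ht, hc, h]; simp

/-- Applies `eq_or_eq_neg_of_volumePreserving` to `χ = Φ⁻¹ ∘ Φ'` and `ψ = Ψ⁻¹ ∘ Ψ'`. -/
theorem unique_normal_form (o : Fin n) {f : (Fin n → ℂ) → ℂ}
    {Φ Φι Φ' Φι' : (Fin n → ℂ) → (Fin n → ℂ)} {Ψ Ψ' : ℂ → ℂ}
    (h : IsGermBiholo Φ Φι) (hvol : IsVolumePreserving Φ) (hΨ : IsGermAuto Ψ)
    (hf : ∀ᶠ z in 𝓝 (0 : Fin n → ℂ), f (Φ z) = Ψ (∏ i, z i))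
    (h' : IsGermBiholo Φ' Φι') (hvol' : IsVolumePreserving Φ') (hΨ' : IsGermAuto Ψ')
    (hf' : ∀ᶠ z in 𝓝 (0 : Fin n → ℂ), f (Φ' z) = Ψ' (∏ i, z i)) :
    (∀ᶠ t in 𝓝 (0 : ℂ), Ψ' t = Ψ t) ∨ (∀ᶠ t in 𝓝 (0 : ℂ), Ψ' t = Ψ (-t)) := by
  obtain ⟨Λ, hΛ, hl, hr⟩ := exists_inverse_auto hΨ
  have hχ := h.symm.comp h'
  obtain ⟨hχa, -, hχ0, -⟩ := id hχ
  obtain ⟨ha, hιa, h0, hι0, -, hri⟩ := id h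
  obtain ⟨ha', -, h0', -⟩ := id h'
  have hpa := prod_analyticAt (n := n) 0
  have hpz := prod_zero_eq o
  have hψ : IsGermAuto (fun t => Λ (Ψ' t)) := by
    refine ⟨analyticAt_comp_zero hΛ.1 hΨ'.1 hΨ'.2.1, by simp [hΨ'.2.1, hΛ.2.1], ?_⟩
    have h1 : HasDerivAt Λ (deriv Λ 0) (Ψ' 0) := by
      rw [hΨ'.2.1]; exact hΛ.1.differentiableAt.hasDerivAt
    have h2 : HasDerivAt (fun t => Λ (Ψ' t)) _ 0 :=
      h1.comp 0 hΨ'.1.differentiableAt.hasDerivAt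
    rw [h2.deriv]
    exact mul_ne_zero hΛ.2.2 hΨ'.2.2
  have hv : IsVolumePreserving (fun z => Φι (Φ' z)) := by
    filter_upwards [hvol', eventually_comp ha' h0' h.det_mul_det,
      eventually_comp hχa hχ0 hvol, eventually_comp ha' h0' hιa.eventually_analyticAt,
      ha'.eventually_analyticAt] with z h1 h2 h3 h4 h5
    rw [h3, one_mul] at h2
    rw [det_fderiv_comp h4.differentiableAt h5.differentiableAt, h2, h1, one_mul]
  have hp : ∀ᶠ z in 𝓝 (0 : Fin n → ℂ), ∏ i, Φι (Φ' z) i = Λ (Ψ' (∏ i, z i)) := by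
    filter_upwards [hf', eventually_comp ha' h0' hri, eventually_comp hχa hχ0 hf,
      eventually_comp (analyticAt_comp_zero hpa hχa hχ0) (by simp only [hχ0]; exact hpz) hl]
      with z h1 h2 h3 h4
    rw [← h1, ← h4, ← h3, h2]
  have hrΨ := eventually_comp hΨ'.1 hΨ'.2.1 hr
  rcases eq_or_eq_neg_of_volumePreserving o hχ hv hψ hp with h | h
  · left
    filter_upwards [h, hrΨ] with t h1 h2
    rw [h1] at h2
    exact h2.symm
  · right
    filter_upwards [h, hrΨ] with t h1 h2
    rw [h1] at h2
    exact h2.symm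

end

/-- **Theorem (Szawlowski).** If `f` is right equivalent to the product of all
coordinates, then `f ∘ Φ = Ψ(z₁⋯zₙ)` for a volume-preserving biholomorphism `Φ` and an
automorphism `Ψ` of `(ℂ,0)`, and `Ψ` is uniquely determined by `f` up to a sign. -/
theorem stmt_15 (n : ℕ) (hn : 2 ≤ n) (f : (Fin n → ℂ) → ℂ)
    (hf : AnalyticAt ℂ f 0)
    -- `f` is right equivalent to the product of all coordinates
    (hre : ∃ σ σι : (Fin n → ℂ) → (Fin n → ℂ), IsGermBiholo σ σι ∧
      ∀ᶠ z in 𝓝 (0 : Fin n → ℂ), f (σι z) = ∏ i, z i) :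
    ∃ Φ Φι : (Fin n → ℂ) → (Fin n → ℂ), IsGermBiholo Φ Φι ∧ IsVolumePreserving Φ ∧
    ∃ Ψ : ℂ → ℂ, IsGermAuto Ψ ∧
      -- `f ∘ Φ = Ψ(z₁ ⋯ zₙ)`
      (∀ᶠ z in 𝓝 (0 : Fin n → ℂ), f (Φ z) = Ψ (∏ i, z i)) ∧
      -- `Ψ` is uniquely determined by `f` up to a sign
      (∀ Φ' Φι' : (Fin n → ℂ) → (Fin n → ℂ), ∀ Ψ' : ℂ → ℂ,
        IsGermBiholo Φ' Φι' → IsVolumePreserving Φ' → IsGermAuto Ψ' →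
        (∀ᶠ z in 𝓝 (0 : Fin n → ℂ), f (Φ' z) = Ψ' (∏ i, z i)) →
        (∀ᶠ t in 𝓝 (0 : ℂ), Ψ' t = Ψ t) ∨ (∀ᶠ t in 𝓝 (0 : ℂ), Ψ' t = Ψ (-t))) := by
  obtain ⟨σ, σι, hσ, hfσ⟩ := hre
  obtain ⟨Φ, Φι, hΦ, hvol, Ψ, hΨ, hfΦ⟩ := exists_normal_form hn hσ hfσ
  exact ⟨Φ, Φι, hΦ, hvol, Ψ, hΨ, hfΦ, fun Φ' Φι' Ψ' h1 h2 h3 h4 =>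
    unique_normal_form ⟨0, by omega⟩ hΦ hvol hΨ hfΦ h1 h2 h3 h4⟩
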